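/- arXiv:2402.04526 — 12 statements merged into one kernel-verified Lean document; each statement's English description precedes it below -/
import Mathlib

section
/- If e₁ ∈ E_L', e₂ ∈ E_R', and e₁ and e₂ share exactly one vertex v (that is, e₁ ∩ e₂ = {v}), then v ∈ X_i \ {v'}. -/
theorem aux_avoid {I : Type*} (T : SimpleGraph I) (a i L : I) (hiL : T.Adj i L)
    (h : ∃ p : T.Path a i, L ∈ p.val.support) :
    ∃ w : T.Walk a L, i ∉ w.support := by
  classical
  obtain ⟨p, hL⟩ := h
  exact ⟨p.val.takeUntil L hL, SimpleGraph.Walk.endpoint_notMem_support_takeUntil p.property hL hiL.ne⟩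


theorem fact_intersecting_vertex_in_Xi {V I : Type*}
    (G : SimpleGraph V) (T : SimpleGraph I) (hT : T.IsTree) (X : I → Set V)
    (hcover : ∀ v : V, ∃ i : I, v ∈ X i)
    (hedge : ∀ u v : V, G.Adj u v → ∃ i : I, u ∈ X i ∧ v ∈ X i)
    (hpath : ∀ i s j : I, (∃ p : T.Path i s, j ∈ p.val.support) → X i ∩ X s ⊆ X j)
    (i L R : I) (hiL : T.Adj i L) (hiR : T.Adj i R) (hLR : L ≠ R)
    (rep : Sym2 V → I)
    (hrep : ∀ e ∈ G.edgeSet, ∀ v ∈ e, v ∈ X (rep e))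
    (v' : V) (hv' : X i \ X R = {v'})
    (e₁ e₂ : Sym2 V) (he₁ : e₁ ∈ G.edgeSet) (he₂ : e₂ ∈ G.edgeSet)
    (he₁L : ∃ p : T.Path (rep e₁) i, L ∈ p.val.support)
    (he₂R : ∃ p : T.Path (rep e₂) i, R ∈ p.val.support)
    (v : V) (hv₁ : v ∈ e₁) (hv₂ : v ∈ e₂)
    (honly : ∀ w : V, w ∈ e₁ → w ∈ e₂ → w = v) :
    v ∈ X i \ {v'} := by
  classical
  obtain ⟨w₁, hw₁⟩ := aux_avoid T _ i L hiL he₁L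
  obtain ⟨w₂, hw₂⟩ := aux_avoid T _ i R hiR he₂R
  obtain ⟨q⟩ := hT.connected.preconnected (rep e₁) (rep e₂)
  have hi : i ∈ q.toPath.val.support := by
    by_contra hq
    let w := w₁.reverse.append (q.toPath.val.append w₂)
    have hw : i ∉ w.support := by
      simp only [w, SimpleGraph.Walk.mem_support_append_iff,
        SimpleGraph.Walk.support_reverse, List.mem_reverse]
      tauto
    have hb : i ∉ w.bypass.support := fun h => hw (w.support_bypass_subset h)
    have hp : (SimpleGraph.Walk.cons hiL w.bypass).IsPath :=
      (SimpleGraph.Walk.cons_isPath_iff _ _).2 ⟨w.bypass_isPath, hb⟩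
    have he := hT.isAcyclic.path_unique ⟨_, hp⟩ (SimpleGraph.Path.singleton hiR)
    have hs := congrArg (fun p : T.Path i R => L ∈ p.val.support) he
    simp [SimpleGraph.Path.singleton, hLR, hiL.ne'] at hs
  have h1 := hrep e₁ he₁ v hv₁
  have h2 := hrep e₂ he₂ v hv₂
  have h3 : v ∈ X i := hpath _ _ i ⟨q.toPath, hi⟩ ⟨h1, h2⟩
  have h4 : v ∈ X R := hpath _ _ R he₂R ⟨h2, h3⟩
  refine ⟨h3, ?_⟩
  rw [← hv']
  exact fun h => h.2 h4
end

section
/- In the split setup, for every pair (c₁,c₂) ∈ C×C: A^(2) = (A_L^(2) ∪ A_R^(2) ∪ Ā^(2)) \ {v''}, where Ā^(2) = {v₀ : ∃v₁, (v₀,v₁) ∈ A_L^(9) and v₁ ∈ A_R^(6)} ∪ {v₀ : ∃v₁, (v₀,v₁) ∈ A_R^(9) and v₁ ∈ A_L^(6)}. -/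
variable {V C : Type*}

def N1 (X : Set V) (Es : Set (Sym2 V)) (f : Sym2 V → C) (c₁ c₂ : C) : Set V :=
  {v₀ | v₀ ∈ X ∧ ∃ v₁ v₂, s(v₀, v₁) ∈ Es ∧ s(v₁, v₂) ∈ Es ∧
    f s(v₀, v₁) = c₁ ∧ f s(v₁, v₂) = c₂}

def N2 (X : Set V) (Es : Set (Sym2 V)) (f : Sym2 V → C) (c₁ c₂ : C) : Set V :=
  {v₀ | v₀ ∈ X ∧ ∃ v₁ v₂, s(v₀, v₁) ∈ Es ∧ s(v₁, v₂) ∈ Es ∧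
    f s(v₀, v₁) = c₂ ∧ f s(v₁, v₂) = c₁}

def N3 (X : Set V) (Es : Set (Sym2 V)) (f : Sym2 V → C) (c₁ c₂ : C) : Set (V × V) :=
  {p | p.1 ∈ X ∧ p.2 ∈ X ∧ ∃ v₁, s(p.1, v₁) ∈ Es ∧ s(v₁, p.2) ∈ Es ∧
    f s(p.1, v₁) = c₁ ∧ f s(v₁, p.2) = c₂}

def N4 (X : Set V) (Es : Set (Sym2 V)) (f : Sym2 V → C) (c₁ c₂ : C) : Set V :=
  {v₀ | v₀ ∈ X ∧ ∃ v₁ v₂ v₃, s(v₀, v₁) ∈ Es ∧ s(v₁, v₂) ∈ Es ∧ s(v₂, v₃) ∈ Es ∧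
    f s(v₀, v₁) = c₁ ∧ f s(v₁, v₂) = c₂ ∧ f s(v₂, v₃) = c₁}

def N5 (X : Set V) (Es : Set (Sym2 V)) (f : Sym2 V → C) (c₁ c₂ : C) : Set V :=
  {v₀ | v₀ ∈ X ∧ ∃ v₁ v₂ v₃, s(v₀, v₁) ∈ Es ∧ s(v₁, v₂) ∈ Es ∧ s(v₂, v₃) ∈ Es ∧
    f s(v₀, v₁) = c₂ ∧ f s(v₁, v₂) = c₁ ∧ f s(v₂, v₃) = c₂}

def N6 (X : Set V) (Es : Set (Sym2 V)) (f : Sym2 V → C) (c₁ c₂ : C) : Set V :=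
  {v₀ | v₀ ∈ X ∧ ∃ v, s(v₀, v) ∈ Es ∧ f s(v₀, v) = c₁}

def N7 (X : Set V) (Es : Set (Sym2 V)) (f : Sym2 V → C) (c₁ c₂ : C) : Set V :=
  {v₀ | v₀ ∈ X ∧ ∃ v, s(v₀, v) ∈ Es ∧ f s(v₀, v) = c₂}

def N8 (X : Set V) (Es : Set (Sym2 V)) (f : Sym2 V → C) (c₁ c₂ : C) : Set (V × V) :=
  {p | p.1 ∈ X ∧ p.2 ∈ X ∧ s(p.1, p.2) ∈ Es ∧ f s(p.1, p.2) = c₁}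

def N9 (X : Set V) (Es : Set (Sym2 V)) (f : Sym2 V → C) (c₁ c₂ : C) : Set (V × V) :=
  {p | p.1 ∈ X ∧ p.2 ∈ X ∧ s(p.1, p.2) ∈ Es ∧ f s(p.1, p.2) = c₂}

theorem recursion_N2
    [Fintype V] [Fintype C] (G : SimpleGraph V)
    (Xi XL XR : Set V) (v' v'' : V)
    (hXL : XL = Xi)
    (hv' : Xi \ XR = {v'}) (hv'' : XR \ Xi = {v''})
    (EL ER : Set (Sym2 V)) (hELG : EL ⊆ G.edgeSet) (hERG : ER ⊆ G.edgeSet)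
    (hdisj : Disjoint EL ER)
    (hERv : ∀ e ∈ ER, v' ∉ e)
    (hELv : ∀ e ∈ EL, v'' ∉ e)
    (hshare : ∀ v : V, (∃ e ∈ EL, v ∈ e) → (∃ e ∈ ER, v ∈ e) → v ∈ Xi \ {v'})
    (f : Sym2 V → C) (c₁ c₂ : C) :
    N2 Xi (EL ∪ ER) f c₁ c₂ =
      (N2 XL EL f c₁ c₂ ∪ N2 XR ER f c₁ c₂ ∪
        ({v₀ | ∃ v₁, (v₀, v₁) ∈ N9 XL EL f c₁ c₂ ∧ v₁ ∈ N6 XR ER f c₁ c₂} ∪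
         {v₀ | ∃ v₁, (v₀, v₁) ∈ N9 XR ER f c₁ c₂ ∧ v₁ ∈ N6 XL EL f c₁ c₂})) \ {v''} := by
  subst hXL
  have hR : ∀ v, v ∈ XL → v ≠ v' → v ∈ XR := by
    intro v hv hne
    by_contra h
    have : v ∈ XL \ XR := ⟨hv, h⟩
    rw [hv'] at this
    exact hne this
  have hL : ∀ v, v ∈ XR → v ≠ v'' → v ∈ XL := by
    intro v hv hne
    by_contra h
    have : v ∈ XR \ XL := ⟨hv, h⟩
    rw [hv''] at this
    exact hne this
  have hn : v'' ∉ XL := by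
    have : v'' ∈ XR \ XL := by rw [hv'']; rfl
    exact this.2
  have hER1 : ∀ a b, s(a, b) ∈ ER → a ≠ v' := by
    rintro a b h rfl
    exact hERv _ h (Sym2.mem_mk_left _ _)
  have hsh : ∀ a b c, s(a, b) ∈ EL → s(b, c) ∈ ER → b ∈ XL ∧ b ≠ v' := fun a b c h1 h2 =>
    hshare b ⟨_, h1, Sym2.mem_mk_right _ _⟩ ⟨_, h2, Sym2.mem_mk_left _ _⟩
  have hsh2 : ∀ a b c, s(a, b) ∈ ER → s(b, c) ∈ EL → b ∈ XL ∧ b ≠ v' := fun a b c h1 h2 =>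
    hshare b ⟨_, h2, Sym2.mem_mk_left _ _⟩ ⟨_, h1, Sym2.mem_mk_right _ _⟩
  ext v
  constructor
  · rintro ⟨hv, v₁, v₂, h1, h2, e1, e2⟩
    refine ⟨?_, fun h => hn (h ▸ hv)⟩
    rcases h1 with h1 | h1 <;> rcases h2 with h2 | h2
    · exact Or.inl (Or.inl ⟨hv, v₁, v₂, h1, h2, e1, e2⟩)
    · obtain ⟨a, b⟩ := hsh _ _ _ h1 h2
      exact Or.inr (Or.inl ⟨v₁, ⟨hv, a, h1, e1⟩, hR _ a b, v₂, h2, e2⟩)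
    · obtain ⟨a, b⟩ := hsh2 _ _ _ h1 h2
      exact Or.inr (Or.inr ⟨v₁, ⟨hR _ hv (hER1 _ _ h1), hR _ a b, h1, e1⟩, a, v₂, h2, e2⟩)
    · exact Or.inl (Or.inr ⟨hR _ hv (hER1 _ _ h1), v₁, v₂, h1, h2, e1, e2⟩)
  · rintro ⟨((⟨hv, v₁, v₂, h1, h2, e1, e2⟩ | ⟨hv, v₁, v₂, h1, h2, e1, e2⟩) |
      (⟨v₁, ⟨hv, _, h1, e1⟩, _, v₂, h2, e2⟩ | ⟨v₁, ⟨hv, _, h1, e1⟩, _, v₂, h2, e2⟩)), hne⟩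
    · exact ⟨hv, v₁, v₂, Or.inl h1, Or.inl h2, e1, e2⟩
    · exact ⟨hL _ hv hne, v₁, v₂, Or.inr h1, Or.inr h2, e1, e2⟩
    · exact ⟨hv, v₁, v₂, Or.inl h1, Or.inr h2, e1, e2⟩
    · exact ⟨hL _ hv hne, v₁, v₂, Or.inr h1, Or.inl h2, e1, e2⟩
end

section
/- In the split setup, for every pair (c₁,c₂) ∈ C×C: A^(3) equals (A_L^(3) ∪ A_R^(3) ∪ Ā^(3)) with all pairs having v'' as a coordinate removed, where Ā^(3) = {(v₁,v₂) : ∃v₃, (v₁,v₃) ∈ A_L^(8) and (v₃,v₂) ∈ A_R^(9)} ∪ {(v₁,v₂) : ∃v₃, (v₁,v₃) ∈ A_R^(8) and (v₃,v₂) ∈ A_L^(9)}. -/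
variable {V C : Type*}

theorem recursion_N3
    [Fintype V] [Fintype C] (G : SimpleGraph V)
    (Xi XL XR : Set V) (v' v'' : V)
    (hXL : XL = Xi)
    (hv' : Xi \ XR = {v'}) (hv'' : XR \ Xi = {v''})
    (EL ER : Set (Sym2 V)) (hELG : EL ⊆ G.edgeSet) (hERG : ER ⊆ G.edgeSet)
    (hdisj : Disjoint EL ER)
    (hERv : ∀ e ∈ ER, v' ∉ e)
    (hELv : ∀ e ∈ EL, v'' ∉ e)
    (hshare : ∀ v : V, (∃ e ∈ EL, v ∈ e) → (∃ e ∈ ER, v ∈ e) → v ∈ Xi \ {v'})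
    (f : Sym2 V → C) (c₁ c₂ : C) :
    N3 Xi (EL ∪ ER) f c₁ c₂ =
      (N3 XL EL f c₁ c₂ ∪ N3 XR ER f c₁ c₂ ∪
        ({p : V × V | ∃ v₃, (p.1, v₃) ∈ N8 XL EL f c₁ c₂ ∧ (v₃, p.2) ∈ N9 XR ER f c₁ c₂} ∪
         {p : V × V | ∃ v₃, (p.1, v₃) ∈ N8 XR ER f c₁ c₂ ∧ (v₃, p.2) ∈ N9 XL EL f c₁ c₂})) \ {p : V × V | p.1 = v'' ∨ p.2 = v''} := by
  subst hXL
  have hR : ∀ x y, s(x, y) ∈ ER → x ∈ XL → x ∈ XR := by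
    intro x y he hx
    by_contra hn
    have : x ∈ XL \ XR := ⟨hx, hn⟩
    rw [hv'] at this
    have hxv : x = v' := this
    exact hERv _ he (by simp [← hxv])
  have hR2 : ∀ x y, s(y, x) ∈ ER → x ∈ XL → x ∈ XR := by
    intro x y he hx
    exact hR x y (by rwa [Sym2.eq_swap]) hx
  have hI : ∀ x, x ∈ XR → x ≠ v'' → x ∈ XL := by
    intro x hx hne
    by_contra hn
    have : x ∈ XR \ XL := ⟨hx, hn⟩
    rw [hv''] at this
    exact hne this
  have hN : v'' ∉ XL := by
    have : v'' ∈ XR \ XL := by rw [hv'']; rfl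
    exact this.2
  ext ⟨a, b⟩
  simp only [N3, N8, N9, Set.mem_setOf_eq, Set.mem_union, Set.mem_diff, not_or]
  constructor
  · rintro ⟨ha, hb, v, h1, h2, hc1, hc2⟩
    refine ⟨?_, fun h => hN (h ▸ ha), fun h => hN (h ▸ hb)⟩
    rcases h1 with h1 | h1 <;> rcases h2 with h2 | h2
    · exact Or.inl (Or.inl ⟨ha, hb, v, h1, h2, hc1, hc2⟩)
    · have hv := (hshare v ⟨_, h1, by simp⟩ ⟨_, h2, by simp⟩).1
      exact Or.inr (Or.inl ⟨v, ⟨ha, hv, h1, hc1⟩, hR _ _ h2 hv, hR2 _ _ h2 hb, h2, hc2⟩)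
    · have hv := (hshare v ⟨_, h2, by simp⟩ ⟨_, h1, by simp⟩).1
      exact Or.inr (Or.inr ⟨v, ⟨hR _ _ h1 ha, hR2 _ _ h1 hv, h1, hc1⟩, hv, hb, h2, hc2⟩)
    · exact Or.inl (Or.inr ⟨hR _ _ h1 ha, hR2 _ _ h2 hb, v, h1, h2, hc1, hc2⟩)
  · rintro ⟨h, hna, hnb⟩
    rcases h with (⟨ha, hb, v, h1, h2, hc1, hc2⟩ | ⟨ha, hb, v, h1, h2, hc1, hc2⟩) |
      (⟨v, ⟨ha, _, h1, hc1⟩, _, hb, h2, hc2⟩ | ⟨v, ⟨ha, _, h1, hc1⟩, _, hb, h2, hc2⟩)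
    · exact ⟨ha, hb, v, Or.inl h1, Or.inl h2, hc1, hc2⟩
    · exact ⟨hI _ ha hna, hI _ hb hnb, v, Or.inr h1, Or.inr h2, hc1, hc2⟩
    · exact ⟨ha, hI _ hb hnb, v, Or.inl h1, Or.inr h2, hc1, hc2⟩
    · exact ⟨hI _ ha hna, hb, v, Or.inr h1, Or.inl h2, hc1, hc2⟩
end

section
/- In the split setup, for every pair (c₁,c₂) ∈ C×C: A^(4) = (A_L^(4) ∪ A_R^(4) ∪ Ā^(4)) \ {v''}, where Ā^(4) = {v₀ : ∃v₁, (v₀,v₁) ∈ A_L^(3) and v₁ ∈ A_R^(6)} ∪ {v₀ : ∃v₁,v₂, (v₀,v₁) ∈ A_L^(8), (v₁,v₂) ∈ A_R^(9) and v₂ ∈ A_L^(6)} ∪ {v₀ : ∃v₁, (v₀,v₁) ∈ A_L^(8) and v₁ ∈ A_R^(2)} ∪ {v₀ : ∃v₁, (v₀,v₁) ∈ A_R^(3) and v₁ ∈ A_L^(6)} ∪ {v₀ : ∃v₁,v₂, (v₀,v₁) ∈ A_R^(8), (v₁,v₂) ∈ A_L^(9) and v₂ ∈ A_R^(6)} ∪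 {v₀ : ∃v₁, (v₀,v₁) ∈ A_R^(8) and v₁ ∈ A_L^(2)}. -/
variable {V C : Type*}

theorem recursion_N4
    [Fintype V] [Fintype C] (G : SimpleGraph V)
    (Xi XL XR : Set V) (v' v'' : V)
    (hXL : XL = Xi)
    (hv' : Xi \ XR = {v'}) (hv'' : XR \ Xi = {v''})
    (EL ER : Set (Sym2 V)) (hELG : EL ⊆ G.edgeSet) (hERG : ER ⊆ G.edgeSet)
    (hdisj : Disjoint EL ER)
    (hERv : ∀ e ∈ ER, v' ∉ e)
    (hELv : ∀ e ∈ EL, v'' ∉ e)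
    (hshare : ∀ v : V, (∃ e ∈ EL, v ∈ e) → (∃ e ∈ ER, v ∈ e) → v ∈ Xi \ {v'})
    (f : Sym2 V → C) (c₁ c₂ : C) :
    N4 Xi (EL ∪ ER) f c₁ c₂ =
      (N4 XL EL f c₁ c₂ ∪ N4 XR ER f c₁ c₂ ∪
        ({v₀ | ∃ v₁, (v₀, v₁) ∈ N3 XL EL f c₁ c₂ ∧ v₁ ∈ N6 XR ER f c₁ c₂} ∪
         {v₀ | ∃ v₁ v₂, (v₀, v₁) ∈ N8 XL EL f c₁ c₂ ∧ (v₁, v₂) ∈ N9 XR ER f c₁ c₂ ∧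
           v₂ ∈ N6 XL EL f c₁ c₂} ∪
         {v₀ | ∃ v₁, (v₀, v₁) ∈ N8 XL EL f c₁ c₂ ∧ v₁ ∈ N2 XR ER f c₁ c₂} ∪
         {v₀ | ∃ v₁, (v₀, v₁) ∈ N3 XR ER f c₁ c₂ ∧ v₁ ∈ N6 XL EL f c₁ c₂} ∪
         {v₀ | ∃ v₁ v₂, (v₀, v₁) ∈ N8 XR ER f c₁ c₂ ∧ (v₁, v₂) ∈ N9 XL EL f c₁ c₂ ∧
           v₂ ∈ N6 XR ER f c₁ c₂} ∪
         {v₀ | ∃ v₁, (v₀, v₁) ∈ N8 XR ER f c₁ c₂ ∧ v₁ ∈ N2 XL EL f c₁ c₂})) \ {v''} := by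
  subst hXL
  have hXi'' : v'' ∉ XL := by
    have h : v'' ∈ XR \ XL := by rw [hv'']; rfl
    exact h.2
  have toR : ∀ v, v ∈ XL → v ≠ v' → v ∈ XR := by
    intro v hv hne
    by_contra h
    have h2 : v ∈ XL \ XR := ⟨hv, h⟩
    rw [hv'] at h2
    exact hne h2
  have toL : ∀ v, v ∈ XR → v ≠ v'' → v ∈ XL := by
    intro v hv hne
    by_contra h
    have h2 : v ∈ XR \ XL := ⟨hv, h⟩
    rw [hv''] at h2
    exact hne h2
  have ERl : ∀ a b, s(a, b) ∈ ER → a ≠ v' := by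
    rintro a b h rfl
    exact hERv _ h (Sym2.mem_mk_left _ _)
  have sh1 : ∀ a b c, s(a, b) ∈ EL → s(b, c) ∈ ER → b ∈ XL ∧ b ∈ XR := by
    intro a b c h1 h2
    have h := hshare b ⟨_, h1, Sym2.mem_mk_right _ _⟩ ⟨_, h2, Sym2.mem_mk_left _ _⟩
    exact ⟨h.1, toR b h.1 h.2⟩
  have sh2 : ∀ a b c, s(a, b) ∈ ER → s(b, c) ∈ EL → b ∈ XL ∧ b ∈ XR := by
    intro a b c h1 h2
    have h := hshare b ⟨_, h2, Sym2.mem_mk_left _ _⟩ ⟨_, h1, Sym2.mem_mk_right _ _⟩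
    exact ⟨h.1, toR b h.1 h.2⟩
  ext v
  simp only [N2, N3, N4, N6, N8, N9, Set.mem_union, Set.mem_diff, Set.mem_setOf_eq,
    Set.mem_singleton_iff]
  constructor
  · rintro ⟨hv, a, b, c, h1, h2, h3, k1, k2, k3⟩
    refine ⟨?_, fun h => hXi'' (h ▸ hv)⟩
    rcases h1 with h1 | h1
    · rcases h2 with h2 | h2
      · rcases h3 with h3 | h3
        · exact .inl (.inl ⟨hv, a, b, c, h1, h2, h3, k1, k2, k3⟩)
        · have hb := sh1 _ _ _ h2 h3
          exact .inr (.inl (.inl (.inl (.inl (.inl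
            ⟨b, ⟨hv, hb.1, a, h1, h2, k1, k2⟩, hb.2, c, h3, k3⟩)))))
      · have ha := sh1 _ _ _ h1 h2
        rcases h3 with h3 | h3
        · have hb := sh2 _ _ _ h2 h3
          exact .inr (.inl (.inl (.inl (.inl (.inr
            ⟨a, b, ⟨hv, ha.1, h1, k1⟩, ⟨ha.2, hb.2, h2, k2⟩, hb.1, c, h3, k3⟩)))))
        · exact .inr (.inl (.inl (.inl (.inr
            ⟨a, ⟨hv, ha.1, h1, k1⟩, ha.2, b, c, h2, h3, k2, k3⟩))))
    · have hvR := toR v hv (ERl _ _ h1)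
      rcases h2 with h2 | h2
      · have ha := sh2 _ _ _ h1 h2
        rcases h3 with h3 | h3
        · exact .inr (.inr
            ⟨a, ⟨hvR, ha.2, h1, k1⟩, ha.1, b, c, h2, h3, k2, k3⟩)
        · have hb := sh1 _ _ _ h2 h3
          exact .inr (.inl (.inr
            ⟨a, b, ⟨hvR, ha.2, h1, k1⟩, ⟨ha.1, hb.1, h2, k2⟩, hb.2, c, h3, k3⟩))
      · rcases h3 with h3 | h3
        · have hb := sh2 _ _ _ h2 h3
          exact .inr (.inl (.inl (.inr
            ⟨b, ⟨hvR, hb.2, a, h1, h2, k1, k2⟩, hb.1, c, h3, k3⟩)))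
        · exact .inl (.inr ⟨hvR, a, b, c, h1, h2, h3, k1, k2, k3⟩)
  · rintro ⟨h, hne⟩
    rcases h with (⟨hv, a, b, c, h1, h2, h3, k1, k2, k3⟩ | ⟨hv, a, b, c, h1, h2, h3, k1, k2, k3⟩) |
      (((((⟨b, ⟨hv, _, a, h1, h2, k1, k2⟩, _, c, h3, k3⟩ |
      ⟨a, b, ⟨hv, _, h1, k1⟩, ⟨_, _, h2, k2⟩, _, c, h3, k3⟩) |
      ⟨a, ⟨hv, _, h1, k1⟩, _, b, c, h2, h3, k2, k3⟩) |
      ⟨b, ⟨hv, _, a, h1, h2, k1, k2⟩, _, c, h3, k3⟩) |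
      ⟨a, b, ⟨hv, _, h1, k1⟩, ⟨_, _, h2, k2⟩, _, c, h3, k3⟩) |
      ⟨a, ⟨hv, _, h1, k1⟩, _, b, c, h2, h3, k2, k3⟩)
    · exact ⟨hv, a, b, c, .inl h1, .inl h2, .inl h3, k1, k2, k3⟩
    · exact ⟨toL v hv hne, a, b, c, .inr h1, .inr h2, .inr h3, k1, k2, k3⟩
    · exact ⟨hv, a, b, c, .inl h1, .inl h2, .inr h3, k1, k2, k3⟩
    · exact ⟨hv, a, b, c, .inl h1, .inr h2, .inl h3, k1, k2, k3⟩
    · exact ⟨hv, a, b, c, .inl h1, .inr h2, .inr h3, k1, k2, k3⟩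
    · exact ⟨toL v hv hne, a, b, c, .inr h1, .inr h2, .inl h3, k1, k2, k3⟩
    · exact ⟨toL v hv hne, a, b, c, .inr h1, .inl h2, .inr h3, k1, k2, k3⟩
    · exact ⟨toL v hv hne, a, b, c, .inr h1, .inl h2, .inl h3, k1, k2, k3⟩
end

section
/- In the split setup, for every pair (c₁,c₂) ∈ C×C: A^(5) = (A_L^(5) ∪ A_R^(5) ∪ Ā^(5)) \ {v''}, where Ā^(5) = {v₀ : ∃v₁, (v₁,v₀) ∈ A_L^(3) and v₁ ∈ A_R^(7)} ∪ {v₀ : ∃v₁,v₂, (v₀,v₁) ∈ A_L^(9), (v₁,v₂) ∈ A_R^(8) and v₂ ∈ A_L^(7)} ∪ {v₀ : ∃v₁, (v₀,v₁) ∈ A_L^(9) and v₁ ∈ A_R^(1)} ∪ {v₀ : ∃v₁, (v₁,v₀) ∈ A_R^(3) and v₁ ∈ A_L^(7)} ∪ {v₀ : ∃v₁,v₂, (v₀,v₁) ∈ A_R^(9), (v₁,v₂) ∈ A_L^(8) and v₂ ∈ A_R^(7)} ∪ {v₀ : ∃v₁, (v₀,v₁) ∈ A_R^(9) and v₁ ∈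 A_L^(1)}. -/
variable {V C : Type*}

theorem recursion_N5
    [Fintype V] [Fintype C] (G : SimpleGraph V)
    (Xi XL XR : Set V) (v' v'' : V)
    (hXL : XL = Xi)
    (hv' : Xi \ XR = {v'}) (hv'' : XR \ Xi = {v''})
    (EL ER : Set (Sym2 V)) (hELG : EL ⊆ G.edgeSet) (hERG : ER ⊆ G.edgeSet)
    (hdisj : Disjoint EL ER)
    (hERv : ∀ e ∈ ER, v' ∉ e)
    (hELv : ∀ e ∈ EL, v'' ∉ e)
    (hshare : ∀ v : V, (∃ e ∈ EL, v ∈ e) → (∃ e ∈ ER, v ∈ e) → v ∈ Xi \ {v'})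
    (f : Sym2 V → C) (c₁ c₂ : C) :
    N5 Xi (EL ∪ ER) f c₁ c₂ =
      (N5 XL EL f c₁ c₂ ∪ N5 XR ER f c₁ c₂ ∪
        ({v₀ | ∃ v₁, (v₁, v₀) ∈ N3 XL EL f c₁ c₂ ∧ v₁ ∈ N7 XR ER f c₁ c₂} ∪
         {v₀ | ∃ v₁ v₂, (v₀, v₁) ∈ N9 XL EL f c₁ c₂ ∧ (v₁, v₂) ∈ N8 XR ER f c₁ c₂ ∧
           v₂ ∈ N7 XL EL f c₁ c₂} ∪
         {v₀ | ∃ v₁, (v₀, v₁) ∈ N9 XL EL f c₁ c₂ ∧ v₁ ∈ N1 XR ER f c₁ c₂} ∪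
         {v₀ | ∃ v₁, (v₁, v₀) ∈ N3 XR ER f c₁ c₂ ∧ v₁ ∈ N7 XL EL f c₁ c₂} ∪
         {v₀ | ∃ v₁ v₂, (v₀, v₁) ∈ N9 XR ER f c₁ c₂ ∧ (v₁, v₂) ∈ N8 XL EL f c₁ c₂ ∧
           v₂ ∈ N7 XR ER f c₁ c₂} ∪
         {v₀ | ∃ v₁, (v₀, v₁) ∈ N9 XR ER f c₁ c₂ ∧ v₁ ∈ N1 XL EL f c₁ c₂})) \ {v''} := by
  subst hXL
  have hXR : ∀ v, v ∈ XL → v ≠ v' → v ∈ XR := by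
    intro v h1 h2
    by_contra h3
    have h4 : v ∈ XL \ XR := ⟨h1, h3⟩
    rw [hv'] at h4
    exact h2 h4
  have hXi : ∀ v, v ∈ XR → v ≠ v'' → v ∈ XL := by
    intro v h1 h2
    by_contra h3
    have h4 : v ∈ XR \ XL := ⟨h1, h3⟩
    rw [hv''] at h4
    exact h2 h4
  have hn : v'' ∉ XL := by
    have h4 : v'' ∈ XR \ XL := by rw [hv'']; rfl
    exact h4.2
  have hR : ∀ a b, s(a, b) ∈ ER → a ∈ XL → a ∈ XR := by
    intro a b h h1
    refine hXR a h1 ?_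
    rintro rfl
    exact hERv _ h (Sym2.mem_mk_left _ _)
  have hS : ∀ a b c, s(a, b) ∈ EL → s(b, c) ∈ ER → b ∈ XL ∧ b ∈ XR := by
    intro a b c h1 h2
    have h := hshare b ⟨_, h1, Sym2.mem_mk_right _ _⟩ ⟨_, h2, Sym2.mem_mk_left _ _⟩
    exact ⟨h.1, hXR b h.1 h.2⟩
  have hS' : ∀ a b c, s(a, b) ∈ ER → s(b, c) ∈ EL → b ∈ XL ∧ b ∈ XR := by
    intro a b c h1 h2
    refine hS c b a ?_ ?_
    · rwa [Sym2.eq_swap]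
    · rwa [Sym2.eq_swap]
  ext x
  constructor
  · rintro ⟨hx, a, b, c, h1, h2, h3, e1, e2, e3⟩
    refine ⟨?_, fun h => hn (h ▸ hx)⟩
    have e1' : f s(a, x) = c₂ := by rwa [Sym2.eq_swap]
    have e2' : f s(b, a) = c₁ := by rwa [Sym2.eq_swap]
    rcases h1 with h1 | h1 <;> rcases h2 with h2 | h2 <;> rcases h3 with h3 | h3
    · exact Or.inl (Or.inl ⟨hx, a, b, c, h1, h2, h3, e1, e2, e3⟩)
    · have hb := hS _ _ _ h2 h3
      rw [Sym2.eq_swap] at h1 h2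
      exact Or.inr (Or.inl (Or.inl (Or.inl (Or.inl (Or.inl
        ⟨b, ⟨hb.1, hx, a, h2, h1, e2', e1'⟩, hb.2, c, h3, e3⟩)))))
    · have ha := hS _ _ _ h1 h2
      have hb := hS' _ _ _ h2 h3
      exact Or.inr (Or.inl (Or.inl (Or.inl (Or.inl (Or.inr
        ⟨a, b, ⟨hx, ha.1, h1, e1⟩, ⟨ha.2, hb.2, h2, e2⟩, hb.1, c, h3, e3⟩)))))
    · have ha := hS _ _ _ h1 h2
      exact Or.inr (Or.inl (Or.inl (Or.inl (Or.inr
        ⟨a, ⟨hx, ha.1, h1, e1⟩, ha.2, b, c, h2, h3, e2, e3⟩))))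
    · have hx' := hR _ _ h1 hx
      have ha := hS' _ _ _ h1 h2
      exact Or.inr (Or.inr
        ⟨a, ⟨hx', ha.2, h1, e1⟩, ha.1, b, c, h2, h3, e2, e3⟩)
    · have hx' := hR _ _ h1 hx
      have ha := hS' _ _ _ h1 h2
      have hb := hS _ _ _ h2 h3
      exact Or.inr (Or.inl (Or.inr
        ⟨a, b, ⟨hx', ha.2, h1, e1⟩, ⟨ha.1, hb.1, h2, e2⟩, hb.2, c, h3, e3⟩))
    · have hx' := hR _ _ h1 hx
      have hb := hS' _ _ _ h2 h3
      rw [Sym2.eq_swap] at h1 h2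
      exact Or.inr (Or.inl (Or.inl (Or.inr
        ⟨b, ⟨hb.2, hx', a, h2, h1, e2', e1'⟩, hb.1, c, h3, e3⟩)))
    · exact Or.inl (Or.inr ⟨hR _ _ h1 hx, a, b, c, h1, h2, h3, e1, e2, e3⟩)
  · rintro ⟨h, hne⟩
    have hne' : x ≠ v'' := hne
    rcases h with (h | h) | (((((h | h) | h) | h) | h) | h)
    · obtain ⟨hx, a, b, c, h1, h2, h3, e⟩ := h
      exact ⟨hx, a, b, c, Or.inl h1, Or.inl h2, Or.inl h3, e⟩
    · obtain ⟨hx, a, b, c, h1, h2, h3, e⟩ := h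
      exact ⟨hXi x hx hne', a, b, c, Or.inr h1, Or.inr h2, Or.inr h3, e⟩
    · obtain ⟨b, ⟨_, hx, a, h2, h1, e2, e1⟩, _, c, h3, e3⟩ := h
      dsimp only at hx h1 h2 e1 e2
      rw [Sym2.eq_swap] at h1 h2 e1 e2
      exact ⟨hx, a, b, c, Or.inl h1, Or.inl h2, Or.inr h3, e1, e2, e3⟩
    · obtain ⟨a, b, ⟨hx, _, h1, e1⟩, ⟨_, _, h2, e2⟩, _, c, h3, e3⟩ := h
      exact ⟨hx, a, b, c, Or.inl h1, Or.inr h2, Or.inl h3, e1, e2, e3⟩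
    · obtain ⟨a, ⟨hx, _, h1, e1⟩, _, b, c, h2, h3, e2, e3⟩ := h
      exact ⟨hx, a, b, c, Or.inl h1, Or.inr h2, Or.inr h3, e1, e2, e3⟩
    · obtain ⟨b, ⟨_, hx, a, h2, h1, e2, e1⟩, _, c, h3, e3⟩ := h
      dsimp only at hx h1 h2 e1 e2
      rw [Sym2.eq_swap] at h1 h2 e1 e2
      exact ⟨hXi x hx hne', a, b, c, Or.inr h1, Or.inr h2, Or.inl h3, e1, e2, e3⟩
    · obtain ⟨a, b, ⟨hx, _, h1, e1⟩, ⟨_, _, h2, e2⟩, _, c, h3, e3⟩ := h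
      exact ⟨hXi x hx hne', a, b, c, Or.inr h1, Or.inl h2, Or.inr h3, e1, e2, e3⟩
    · obtain ⟨a, ⟨hx, _, h1, e1⟩, _, b, c, h2, h3, e2, e3⟩ := h
      exact ⟨hXi x hx hne', a, b, c, Or.inr h1, Or.inl h2, Or.inl h3, e1, e2, e3⟩
end

section
/- In the split setup, for every tuple (A^(j))_{1≤j≤9} ∈ S(X_i), the set CL_f((A^(j))_{1≤j≤9}) equals the union, taken over all tuples (A_L^(j))_{1≤j≤9} ∈ S(X_L) and (A_R^(j))_{1≤j≤9} ∈ S(X_R) satisfying A^(j) = (A_L^(j) ∪ A_R^(j) ∪ Ā^(j)) \ {v''} for all 1 ≤ j ≤ 9 (where Ā^(j) is built from the tuples (A_L^(j)) and (A_R^(j)) as in the definition below, and for j ∈ {3,8,9} subtracting {v''} means removing all pairs having v'' as a coordinate), of the sets CL_{f_L}((A_L^(j))_{1≤j≤9}) ∩ CL_{f_R}((A_R^(j))_{1≤j≤9}), where CL_{f_L} is the color class function of f_L on X_L and CL_{f_R} is the color class function of f_R on X_R. -/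
variable {V C : Type*}

/-- A 9-tuple `(A⁽¹⁾, …, A⁽⁹⁾)` as in the definition of `S(X)`. -/
structure Tuple9 (V : Type*) where
  A1 : Set V
  A2 : Set V
  A3 : Set (V × V)
  A4 : Set V
  A5 : Set V
  A6 : Set V
  A7 : Set V
  A8 : Set (V × V)
  A9 : Set (V × V)

/-- `S(X)`: the 9-tuples whose components are subsets of `X` resp. `X × X`. -/
def SX (X : Set V) : Set (Tuple9 V) :=
  {A | A.A1 ⊆ X ∧ A.A2 ⊆ X ∧ A.A3 ⊆ X ×ˢ X ∧ A.A4 ⊆ X ∧ A.A5 ⊆ X ∧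
    A.A6 ⊆ X ∧ A.A7 ⊆ X ∧ A.A8 ⊆ X ×ˢ X ∧ A.A9 ⊆ X ×ˢ X}

/-- The color class function `CL_f` of `f` on `X` (with edge set `Es`). -/
def CL (X : Set V) (Es : Set (Sym2 V)) (f : Sym2 V → C) (A : Tuple9 V) : Set (C × C) :=
  {p | A.A1 = N1 X Es f p.1 p.2 ∧ A.A2 = N2 X Es f p.1 p.2 ∧ A.A3 = N3 X Es f p.1 p.2 ∧
    A.A4 = N4 X Es f p.1 p.2 ∧ A.A5 = N5 X Es f p.1 p.2 ∧ A.A6 = N6 X Es f p.1 p.2 ∧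
    A.A7 = N7 X Es f p.1 p.2 ∧ A.A8 = N8 X Es f p.1 p.2 ∧ A.A9 = N9 X Es f p.1 p.2}

/-- Given tuples `A_L` and `A_R`, the tuple `A` with
`A⁽ʲ⁾ = (A_L⁽ʲ⁾ ∪ A_R⁽ʲ⁾ ∪ Ā⁽ʲ⁾) \ {v''}` for all `1 ≤ j ≤ 9`, where the `Ā⁽ʲ⁾` are as in
Eq. (3) of the paper and for the pair-components subtracting `{v''}` means removing all
pairs having `v''` as a coordinate. -/
def combine (v'' : V) (AL AR : Tuple9 V) : Tuple9 V where
  A1 := (AL.A1 ∪ AR.A1 ∪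
    ({v₀ | ∃ v₁, (v₀, v₁) ∈ AL.A8 ∧ v₁ ∈ AR.A7} ∪
     {v₀ | ∃ v₁, (v₀, v₁) ∈ AR.A8 ∧ v₁ ∈ AL.A7})) \ {v''}
  A2 := (AL.A2 ∪ AR.A2 ∪
    ({v₀ | ∃ v₁, (v₀, v₁) ∈ AL.A9 ∧ v₁ ∈ AR.A6} ∪
     {v₀ | ∃ v₁, (v₀, v₁) ∈ AR.A9 ∧ v₁ ∈ AL.A6})) \ {v''}
  A3 := (AL.A3 ∪ AR.A3 ∪
    ({p : V × V | ∃ v₃, (p.1, v₃) ∈ AL.A8 ∧ (v₃, p.2) ∈ AR.A9} ∪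
     {p : V × V | ∃ v₃, (p.1, v₃) ∈ AR.A8 ∧ (v₃, p.2) ∈ AL.A9})) \
    {p : V × V | p.1 = v'' ∨ p.2 = v''}
  A4 := (AL.A4 ∪ AR.A4 ∪
    ({v₀ | ∃ v₁, (v₀, v₁) ∈ AL.A3 ∧ v₁ ∈ AR.A6} ∪
     {v₀ | ∃ v₁ v₂, (v₀, v₁) ∈ AL.A8 ∧ (v₁, v₂) ∈ AR.A9 ∧ v₂ ∈ AL.A6} ∪
     {v₀ | ∃ v₁, (v₀, v₁) ∈ AL.A8 ∧ v₁ ∈ AR.A2} ∪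
     {v₀ | ∃ v₁, (v₀, v₁) ∈ AR.A3 ∧ v₁ ∈ AL.A6} ∪
     {v₀ | ∃ v₁ v₂, (v₀, v₁) ∈ AR.A8 ∧ (v₁, v₂) ∈ AL.A9 ∧ v₂ ∈ AR.A6} ∪
     {v₀ | ∃ v₁, (v₀, v₁) ∈ AR.A8 ∧ v₁ ∈ AL.A2})) \ {v''}
  A5 := (AL.A5 ∪ AR.A5 ∪
    ({v₀ | ∃ v₁, (v₁, v₀) ∈ AL.A3 ∧ v₁ ∈ AR.A7} ∪
     {v₀ | ∃ v₁ v₂, (v₀, v₁) ∈ AL.A9 ∧ (v₁, v₂) ∈ AR.A8 ∧ v₂ ∈ AL.A7} ∪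
     {v₀ | ∃ v₁, (v₀, v₁) ∈ AL.A9 ∧ v₁ ∈ AR.A1} ∪
     {v₀ | ∃ v₁, (v₁, v₀) ∈ AR.A3 ∧ v₁ ∈ AL.A7} ∪
     {v₀ | ∃ v₁ v₂, (v₀, v₁) ∈ AR.A9 ∧ (v₁, v₂) ∈ AL.A8 ∧ v₂ ∈ AR.A7} ∪
     {v₀ | ∃ v₁, (v₀, v₁) ∈ AR.A9 ∧ v₁ ∈ AL.A1})) \ {v''}
  A6 := (AL.A6 ∪ AR.A6 ∪ ∅) \ {v''}
  A7 := (AL.A7 ∪ AR.A7 ∪ ∅) \ {v''}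
  A8 := (AL.A8 ∪ AR.A8 ∪ ∅) \ {p : V × V | p.1 = v'' ∨ p.2 = v''}
  A9 := (AL.A9 ∪ AR.A9 ∪ ∅) \ {p : V × V | p.1 = v'' ∨ p.2 = v''}

/-- The tuple of neighbour sets. -/
def nbTuple (X : Set V) (Es : Set (Sym2 V)) (f : Sym2 V → C) (c₁ c₂ : C) : Tuple9 V where
  A1 := N1 X Es f c₁ c₂
  A2 := N2 X Es f c₁ c₂
  A3 := N3 X Es f c₁ c₂
  A4 := N4 X Es f c₁ c₂
  A5 := N5 X Es f c₁ c₂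
  A6 := N6 X Es f c₁ c₂
  A7 := N7 X Es f c₁ c₂
  A8 := N8 X Es f c₁ c₂
  A9 := N9 X Es f c₁ c₂

theorem nbTuple_mem (X : Set V) (Es : Set (Sym2 V)) (f : Sym2 V → C) (c₁ c₂ : C) :
    nbTuple X Es f c₁ c₂ ∈ SX X :=
  ⟨fun _ h => h.1, fun _ h => h.1, fun _ h => ⟨h.1, h.2.1⟩, fun _ h => h.1, fun _ h => h.1,
    fun _ h => h.1, fun _ h => h.1, fun _ h => ⟨h.1, h.2.1⟩, fun _ h => ⟨h.1, h.2.1⟩⟩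

theorem mem_CL_iff (X : Set V) (Es : Set (Sym2 V)) (f : Sym2 V → C) (A : Tuple9 V) (p : C × C) :
    p ∈ CL X Es f A ↔ A = nbTuple X Es f p.1 p.2 := by
  cases A
  simp [CL, nbTuple]

theorem comb1
    (Xi XR : Set V) (w : V) (EL ER : Set (Sym2 V)) (f : Sym2 V → C)
    (hw : w ∉ Xi)
    (h1 : ∀ a b, s(a, b) ∈ ER → a ∈ Xi → a ∈ XR)
    (h2 : ∀ a, a ∈ XR → a ≠ w → a ∈ Xi)
    (h3 : ∀ a b c, s(a, b) ∈ EL → s(b, c) ∈ ER → b ∈ Xi ∧ b ∈ XR)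
    (c₁ c₂ : C) :
    (N1 Xi EL f c₁ c₂ ∪ N1 XR ER f c₁ c₂ ∪
    ({v₀ | ∃ v₁, (v₀, v₁) ∈ N8 Xi EL f c₁ c₂ ∧ v₁ ∈ N7 XR ER f c₁ c₂} ∪
     {v₀ | ∃ v₁, (v₀, v₁) ∈ N8 XR ER f c₁ c₂ ∧ v₁ ∈ N7 Xi EL f c₁ c₂})) \ {w} =
    N1 Xi (EL ∪ ER) f c₁ c₂ := by
  have hs : ∀ a b : V, s(a, b) = s(b, a) := fun a b => Sym2.eq_swap
  ext x
  simp only [N1, N7, N8, Set.mem_union, Set.mem_diff, Set.mem_setOf_eq, Set.mem_singleton_iff]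
  constructor
  · grind
  · rintro ⟨hx, a, b, h | h, h' | h', e, e'⟩ <;> grind

theorem comb3
    (Xi XR : Set V) (w : V) (EL ER : Set (Sym2 V)) (f : Sym2 V → C)
    (hw : w ∉ Xi)
    (h1 : ∀ a b, s(a, b) ∈ ER → a ∈ Xi → a ∈ XR)
    (h2 : ∀ a, a ∈ XR → a ≠ w → a ∈ Xi)
    (h3 : ∀ a b c, s(a, b) ∈ EL → s(b, c) ∈ ER → b ∈ Xi ∧ b ∈ XR)
    (c₁ c₂ : C) :
    (N3 Xi EL f c₁ c₂ ∪ N3 XR ER f c₁ c₂ ∪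
    ({p : V × V | ∃ v₃, (p.1, v₃) ∈ N8 Xi EL f c₁ c₂ ∧ (v₃, p.2) ∈ N9 XR ER f c₁ c₂} ∪
     {p : V × V | ∃ v₃, (p.1, v₃) ∈ N8 XR ER f c₁ c₂ ∧ (v₃, p.2) ∈ N9 Xi EL f c₁ c₂})) \
    {p : V × V | p.1 = w ∨ p.2 = w} = N3 Xi (EL ∪ ER) f c₁ c₂ := by
  have hs : ∀ a b : V, s(a, b) = s(b, a) := fun a b => Sym2.eq_swap
  ext ⟨x, y⟩
  simp only [N3, N9, N8, Set.mem_union, Set.mem_diff, Set.mem_setOf_eq]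
  constructor
  · grind
  · rintro ⟨hx, hy, a, h | h, h' | h', e, e'⟩ <;> grind

theorem comb4
    (Xi XR : Set V) (w : V) (EL ER : Set (Sym2 V)) (f : Sym2 V → C)
    (hw : w ∉ Xi)
    (h1 : ∀ a b, s(a, b) ∈ ER → a ∈ Xi → a ∈ XR)
    (h2 : ∀ a, a ∈ XR → a ≠ w → a ∈ Xi)
    (h3 : ∀ a b c, s(a, b) ∈ EL → s(b, c) ∈ ER → b ∈ Xi ∧ b ∈ XR)
    (c₁ c₂ : C) :
    (N4 Xi EL f c₁ c₂ ∪ N4 XR ER f c₁ c₂ ∪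
    ({v₀ | ∃ v₁, (v₀, v₁) ∈ N3 Xi EL f c₁ c₂ ∧ v₁ ∈ N6 XR ER f c₁ c₂} ∪
     {v₀ | ∃ v₁ v₂, (v₀, v₁) ∈ N8 Xi EL f c₁ c₂ ∧ (v₁, v₂) ∈ N9 XR ER f c₁ c₂ ∧
        v₂ ∈ N6 Xi EL f c₁ c₂} ∪
     {v₀ | ∃ v₁, (v₀, v₁) ∈ N8 Xi EL f c₁ c₂ ∧ v₁ ∈ N2 XR ER f c₁ c₂} ∪
     {v₀ | ∃ v₁, (v₀, v₁) ∈ N3 XR ER f c₁ c₂ ∧ v₁ ∈ N6 Xi EL f c₁ c₂} ∪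
     {v₀ | ∃ v₁ v₂, (v₀, v₁) ∈ N8 XR ER f c₁ c₂ ∧ (v₁, v₂) ∈ N9 Xi EL f c₁ c₂ ∧
        v₂ ∈ N6 XR ER f c₁ c₂} ∪
     {v₀ | ∃ v₁, (v₀, v₁) ∈ N8 XR ER f c₁ c₂ ∧ v₁ ∈ N2 Xi EL f c₁ c₂})) \ {w} =
    N4 Xi (EL ∪ ER) f c₁ c₂ := by
  have hs : ∀ a b : V, s(a, b) = s(b, a) := fun a b => Sym2.eq_swap
  ext x
  simp only [N2, N3, N4, N6, N9, N8, Set.mem_union, Set.mem_diff, Set.mem_setOf_eq,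
    Set.mem_singleton_iff]
  constructor
  · grind
  · rintro ⟨hx, a, b, c, h | h, h' | h', h'' | h'', e, e', e''⟩ <;> grind

theorem comb6
    (Xi XR : Set V) (w : V) (EL ER : Set (Sym2 V)) (f : Sym2 V → C)
    (hw : w ∉ Xi)
    (h1 : ∀ a b, s(a, b) ∈ ER → a ∈ Xi → a ∈ XR)
    (h2 : ∀ a, a ∈ XR → a ≠ w → a ∈ Xi)
    (h3 : ∀ a b c, s(a, b) ∈ EL → s(b, c) ∈ ER → b ∈ Xi ∧ b ∈ XR)
    (c₁ c₂ : C) :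
    (N6 Xi EL f c₁ c₂ ∪ N6 XR ER f c₁ c₂ ∪ ∅) \ {w} =
    N6 Xi (EL ∪ ER) f c₁ c₂ := by
  ext x
  simp only [N6, Set.union_empty, Set.mem_union, Set.mem_diff, Set.mem_setOf_eq,
    Set.mem_singleton_iff]
  grind

theorem comb8
    (Xi XR : Set V) (w : V) (EL ER : Set (Sym2 V)) (f : Sym2 V → C)
    (hw : w ∉ Xi)
    (h1 : ∀ a b, s(a, b) ∈ ER → a ∈ Xi → a ∈ XR)
    (h2 : ∀ a, a ∈ XR → a ≠ w → a ∈ Xi)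
    (h3 : ∀ a b c, s(a, b) ∈ EL → s(b, c) ∈ ER → b ∈ Xi ∧ b ∈ XR)
    (c₁ c₂ : C) :
    (N8 Xi EL f c₁ c₂ ∪ N8 XR ER f c₁ c₂ ∪ ∅) \ {p : V × V | p.1 = w ∨ p.2 = w} =
    N8 Xi (EL ∪ ER) f c₁ c₂ := by
  have hs : ∀ a b : V, s(a, b) = s(b, a) := fun a b => Sym2.eq_swap
  ext ⟨x, y⟩
  simp only [N8, Set.union_empty, Set.mem_union, Set.mem_diff, Set.mem_setOf_eq]
  grind

theorem N3_swap (X : Set V) (Es : Set (Sym2 V)) (f : Sym2 V → C) (c₁ c₂ : C) (a b : V) :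
    (a, b) ∈ N3 X Es f c₁ c₂ ↔ (b, a) ∈ N3 X Es f c₂ c₁ := by
  have hs : ∀ a b : V, s(a, b) = s(b, a) := fun a b => Sym2.eq_swap
  simp only [N3, Set.mem_setOf_eq]
  grind

theorem CL_recursion
    [Fintype V] [Fintype C] (G : SimpleGraph V)
    (Xi XL XR : Set V) (v' v'' : V)
    (hXL : XL = Xi)
    (hv' : Xi \ XR = {v'}) (hv'' : XR \ Xi = {v''})
    (EL ER : Set (Sym2 V)) (hELG : EL ⊆ G.edgeSet) (hERG : ER ⊆ G.edgeSet)
    (hdisj : Disjoint EL ER)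
    (hERv : ∀ e ∈ ER, v' ∉ e)
    (hELv : ∀ e ∈ EL, v'' ∉ e)
    (hshare : ∀ v : V, (∃ e ∈ EL, v ∈ e) → (∃ e ∈ ER, v ∈ e) → v ∈ Xi \ {v'})
    (f : Sym2 V → C)
    (A : Tuple9 V) (hA : A ∈ SX Xi) :
    CL Xi (EL ∪ ER) f A =
      {p : C × C | ∃ AL ∈ SX XL, ∃ AR ∈ SX XR, combine v'' AL AR = A ∧
        p ∈ CL XL EL f AL ∩ CL XR ER f AR} := by
  subst hXL
  have hw : v'' ∉ XL := (hv''.symm ▸ rfl : v'' ∈ XR \ XL).2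
  have h1 : ∀ a b, s(a, b) ∈ ER → a ∈ XL → a ∈ XR := by
    intro a b h ha
    by_contra hn
    have : a ∈ ({v'} : Set V) := hv' ▸ ⟨ha, hn⟩
    obtain rfl : a = v' := this
    exact hERv _ h (Sym2.mem_mk_left _ _)
  have h2 : ∀ a, a ∈ XR → a ≠ v'' → a ∈ XL := by
    intro a ha hne
    by_contra hn
    have : a ∈ ({v''} : Set V) := hv'' ▸ ⟨ha, hn⟩
    exact hne this
  have h3 : ∀ a b c, s(a, b) ∈ EL → s(b, c) ∈ ER → b ∈ XL ∧ b ∈ XR := by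
    intro a b c h h'
    have := (hshare b ⟨_, h, Sym2.mem_mk_right _ _⟩ ⟨_, h', Sym2.mem_mk_left _ _⟩).1
    exact ⟨this, h1 _ _ h' this⟩
  have key : ∀ c₁ c₂, combine v'' (nbTuple XL EL f c₁ c₂) (nbTuple XR ER f c₁ c₂) =
      nbTuple XL (EL ∪ ER) f c₁ c₂ := by
    intro c₁ c₂
    have e5 := comb4 XL XR v'' EL ER f hw h1 h2 h3 c₂ c₁
    simp only [fun X Es (a b : V) => N3_swap X Es f c₂ c₁ a b] at e5
    simp only [combine, nbTuple, Tuple9.mk.injEq]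
    exact ⟨comb1 XL XR v'' EL ER f hw h1 h2 h3 c₁ c₂, comb1 XL XR v'' EL ER f hw h1 h2 h3 c₂ c₁,
      comb3 XL XR v'' EL ER f hw h1 h2 h3 c₁ c₂, comb4 XL XR v'' EL ER f hw h1 h2 h3 c₁ c₂,
      e5,
      comb6 XL XR v'' EL ER f hw h1 h2 h3 c₁ c₂, comb6 XL XR v'' EL ER f hw h1 h2 h3 c₂ c₁,
      comb8 XL XR v'' EL ER f hw h1 h2 h3 c₁ c₂, comb8 XL XR v'' EL ER f hw h1 h2 h3 c₂ c₁⟩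
  ext p
  simp only [Set.mem_setOf_eq, Set.mem_inter_iff, mem_CL_iff]
  constructor
  · rintro rfl
    exact ⟨_, nbTuple_mem _ _ _ _ _, _, nbTuple_mem _ _ _ _ _, key _ _, rfl, rfl⟩
  · rintro ⟨AL, -, AR, -, rfl, rfl, rfl⟩
    exact key _ _
end

section
/- In the split setup, suppose f : E_i' → C is a valid partial coloring (a star edge coloring of (V, E_i')). Then for every pair (c₁,c₂) ∈ C×C: A_L^(1) ∩ A_R^(2) = ∅ and A_L^(2) ∩ A_R^(1) = ∅. -/
variable {V C : Type*}

/-- A partial coloring (of the edges in `Es`) is proper if no two distinct edges of `Es`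
sharing a vertex receive the same color. -/
def IsProper (Es : Set (Sym2 V)) (f : Sym2 V → C) : Prop :=
  ∀ e₁ ∈ Es, ∀ e₂ ∈ Es, e₁ ≠ e₂ → (∃ v, v ∈ e₁ ∧ v ∈ e₂) → f e₁ ≠ f e₂

/-- A partial coloring is valid (a star edge coloring of `(V, Es)`) if it is proper and no
path or cycle formed by four edges of `Es` is colored with only two colors.  A path or
cycle of length four consists of vertices `v₀, v₁, v₂, v₃, v₄` with consecutive edges in
`Es`, all distinct except that possibly `v₀ = v₄` (the cycle case). -/
def IsValid (Es : Set (Sym2 V)) (f : Sym2 V → C) : Prop :=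
  IsProper Es f ∧
  ∀ v₀ v₁ v₂ v₃ v₄ : V,
    s(v₀, v₁) ∈ Es → s(v₁, v₂) ∈ Es → s(v₂, v₃) ∈ Es → s(v₃, v₄) ∈ Es →
    ([v₀, v₁, v₂, v₃] : List V).Nodup → ([v₁, v₂, v₃, v₄] : List V).Nodup →
    ¬ ∃ c₁ c₂ : C,
      (f s(v₀, v₁) = c₁ ∨ f s(v₀, v₁) = c₂) ∧ (f s(v₁, v₂) = c₁ ∨ f s(v₁, v₂) = c₂) ∧
      (f s(v₂, v₃) = c₁ ∨ f s(v₂, v₃) = c₂) ∧ (f s(v₃, v₄) = c₁ ∨ f s(v₃, v₄) = c₂)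

theorem aux_four {V C : Type*} (G : SimpleGraph V) (EL ER : Set (Sym2 V))
    (hELG : EL ⊆ G.edgeSet) (hERG : ER ⊆ G.edgeSet) (hdisj : Disjoint EL ER)
    (f : Sym2 V → C) (hf : IsValid (EL ∪ ER) f) (a b : C) (v v₁ v₂ w₁ w₂ : V)
    (h1 : s(v, v₁) ∈ EL) (h2 : s(v₁, v₂) ∈ EL) (h3 : s(v, w₁) ∈ ER) (h4 : s(w₁, w₂) ∈ ER)
    (e1 : f s(v, v₁) = a) (e2 : f s(v₁, v₂) = b) (e3 : f s(v, w₁) = b)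
    (e4 : f s(w₁, w₂) = a) : False := by
  obtain ⟨hp, hv⟩ := hf
  have hne : ∀ e ∈ EL, ∀ e' ∈ ER, e ≠ e' := fun e he e' he' h =>
    Set.disjoint_left.mp hdisj he (h ▸ he')
  have hab : a ≠ b := by
    rw [← e1, ← e3]
    exact hp _ (Or.inl h1) _ (Or.inr h3) (hne _ h1 _ h3) ⟨v, by simp, by simp⟩
  have n1 : v ≠ v₁ := G.ne_of_adj (hELG h1)
  have n2 : v₁ ≠ v₂ := G.ne_of_adj (hELG h2)
  have n3 : v ≠ w₁ := G.ne_of_adj (hERG h3)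
  have n4 : w₁ ≠ w₂ := G.ne_of_adj (hERG h4)
  have n5 : v₁ ≠ w₁ := by rintro rfl; exact hne _ h1 _ h3 rfl
  have n6 : v₂ ≠ v := by
    rintro rfl
    rw [Sym2.eq_swap] at e2
    exact hab (e1.symm.trans e2)
  have n7 : w₂ ≠ v := by
    rintro rfl
    rw [Sym2.eq_swap] at e4
    exact hab (e4.symm.trans e3)
  have n8 : v₂ ≠ w₁ := by
    rintro rfl
    exact hp _ (Or.inl h2) _ (Or.inr h3) (hne _ h2 _ h3) ⟨v₂, by simp, by simp⟩
      (e2.trans e3.symm)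
  have n9 : w₂ ≠ v₁ := by
    rintro rfl
    exact hp _ (Or.inl h1) _ (Or.inr h4) (hne _ h1 _ h4) ⟨w₂, by simp, by simp⟩
      (e1.trans e4.symm)
  refine hv v₂ v₁ v w₁ w₂ (Or.inl (Sym2.eq_swap ▸ h2)) (Or.inl (Sym2.eq_swap ▸ h1))
    (Or.inr h3) (Or.inr h4) ?_ ?_ ⟨a, b, ?_, ?_, Or.inr e3, Or.inl e4⟩
  · simp [n6, n8, n5, n3, n2.symm, n1.symm]
  · simp [n5, n3, n4, n1.symm, n9.symm, n7.symm]
  · right; rw [Sym2.eq_swap]; exact e2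
  · left; rw [Sym2.eq_swap]; exact e1

theorem valid_condition_i
    [Fintype V] [Fintype C] (G : SimpleGraph V)
    (Xi XL XR : Set V) (v' v'' : V)
    (hXL : XL = Xi)
    (hv' : Xi \ XR = {v'}) (hv'' : XR \ Xi = {v''})
    (EL ER : Set (Sym2 V)) (hELG : EL ⊆ G.edgeSet) (hERG : ER ⊆ G.edgeSet)
    (hdisj : Disjoint EL ER)
    (hERv : ∀ e ∈ ER, v' ∉ e)
    (hELv : ∀ e ∈ EL, v'' ∉ e)
    (hshare : ∀ v : V, (∃ e ∈ EL, v ∈ e) → (∃ e ∈ ER, v ∈ e) → v ∈ Xi \ {v'})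
    (f : Sym2 V → C) (hf : IsValid (EL ∪ ER) f) (c₁ c₂ : C) :
    N1 XL EL f c₁ c₂ ∩ N2 XR ER f c₁ c₂ = ∅ ∧
    N2 XL EL f c₁ c₂ ∩ N1 XR ER f c₁ c₂ = ∅ := by
  constructor
  · refine Set.eq_empty_iff_forall_notMem.mpr ?_
    rintro v ⟨⟨-, v₁, v₂, h1, h2, e1, e2⟩, -, w₁, w₂, h3, h4, e3, e4⟩
    exact aux_four G EL ER hELG hERG hdisj f hf _ _ v v₁ v₂ w₁ w₂ h1 h2 h3 h4 e1 e2 e3 e4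
  · refine Set.eq_empty_iff_forall_notMem.mpr ?_
    rintro v ⟨⟨-, v₁, v₂, h1, h2, e1, e2⟩, -, w₁, w₂, h3, h4, e3, e4⟩
    exact aux_four G EL ER hELG hERG hdisj f hf _ _ v v₁ v₂ w₁ w₂ h1 h2 h3 h4 e1 e2 e3 e4
end

section
/- In the split setup, suppose f : E_i' → C is a valid partial coloring (a star edge coloring of (V, E_i')). Then for every pair (c₁,c₂) ∈ C×C: if (v₀,v₁) ∈ A_L^(8) and (v₁,v₂) ∈ A_R^(9), then v₀ ∉ A_R^(7) or v₂ ∉ A_L^(6); and if (v₀,v₁) ∈ A_R^(8) and (v₁,v₂) ∈ A_L^(9), then v₀ ∉ A_L^(7) or v₂ ∉ A_R^(6). -/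
variable {V C : Type*}

theorem key_aux (G : SimpleGraph V) (Es EL ER : Set (Sym2 V)) (f : Sym2 V → C)
    (hEs : Es ⊆ G.edgeSet) (hL : EL ⊆ Es) (hR : ER ⊆ Es) (hdisj : Disjoint EL ER)
    (hf : IsValid Es f) (c₁ c₂ : C) (v₀ v₁ v₂ w u : V)
    (h1 : s(v₀, v₁) ∈ EL) (k1 : f s(v₀, v₁) = c₁)
    (h2 : s(v₁, v₂) ∈ ER) (k2 : f s(v₁, v₂) = c₂)
    (h3 : s(v₀, w) ∈ ER) (k3 : f s(v₀, w) = c₂)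
    (h4 : s(v₂, u) ∈ EL) (k4 : f s(v₂, u) = c₁) : False := by
  obtain ⟨hp, hs⟩ := hf
  have hne : ∀ a ∈ EL, ∀ b ∈ ER, a ≠ b := fun a ha b hb h =>
    Set.disjoint_left.mp hdisj ha (h ▸ hb)
  have n01 : v₀ ≠ v₁ := G.ne_of_adj (hEs (hL h1))
  have n12 : v₁ ≠ v₂ := G.ne_of_adj (hEs (hR h2))
  have n0w : v₀ ≠ w := G.ne_of_adj (hEs (hR h3))
  have n2u : v₂ ≠ u := G.ne_of_adj (hEs (hL h4))
  have n02 : v₀ ≠ v₂ := by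
    rintro rfl
    exact hne _ h1 _ h2 Sym2.eq_swap
  have nw1 : w ≠ v₁ := by
    rintro rfl
    exact hne _ h1 _ h3 rfl
  have nu1 : u ≠ v₁ := by
    rintro rfl
    exact hne _ h4 _ h2 Sym2.eq_swap
  have nw2 : w ≠ v₂ := by
    rintro rfl
    refine hp _ (hR h2) _ (hR h3) ?_ ⟨w, by simp, by simp⟩ (k2.trans k3.symm)
    simp [n01.symm, n12]
  have nu0 : u ≠ v₀ := by
    rintro rfl
    refine hp _ (hL h1) _ (hL h4) ?_ ⟨u, by simp, by simp⟩ (k1.trans k4.symm)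
    simp [n02, n12]
  refine hs w v₀ v₁ v₂ u (Sym2.eq_swap ▸ hR h3) (hL h1) (hR h2) (hL h4) ?_ ?_
    ⟨c₁, c₂, Or.inr (by rw [Sym2.eq_swap]; exact k3), Or.inl k1, Or.inr k2, Or.inl k4⟩
  · simp [n0w.symm, nw1, nw2, n01, n02, n12]
  · simp [n01, n02, nu0.symm, n12, nu1.symm, n2u]

theorem valid_condition_ii
    [Fintype V] [Fintype C] (G : SimpleGraph V)
    (Xi XL XR : Set V) (v' v'' : V)
    (hXL : XL = Xi)
    (hv' : Xi \ XR = {v'}) (hv'' : XR \ Xi = {v''})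
    (EL ER : Set (Sym2 V)) (hELG : EL ⊆ G.edgeSet) (hERG : ER ⊆ G.edgeSet)
    (hdisj : Disjoint EL ER)
    (hERv : ∀ e ∈ ER, v' ∉ e)
    (hELv : ∀ e ∈ EL, v'' ∉ e)
    (hshare : ∀ v : V, (∃ e ∈ EL, v ∈ e) → (∃ e ∈ ER, v ∈ e) → v ∈ Xi \ {v'})
    (f : Sym2 V → C) (hf : IsValid (EL ∪ ER) f) (c₁ c₂ : C) :
    (∀ v₀ v₁ v₂ : V, (v₀, v₁) ∈ N8 XL EL f c₁ c₂ → (v₁, v₂) ∈ N9 XR ER f c₁ c₂ →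
      v₀ ∉ N7 XR ER f c₁ c₂ ∨ v₂ ∉ N6 XL EL f c₁ c₂) ∧
    (∀ v₀ v₁ v₂ : V, (v₀, v₁) ∈ N8 XR ER f c₁ c₂ → (v₁, v₂) ∈ N9 XL EL f c₁ c₂ →
      v₀ ∉ N7 XL EL f c₁ c₂ ∨ v₂ ∉ N6 XR ER f c₁ c₂) := by
  have hU : EL ∪ ER ⊆ G.edgeSet := Set.union_subset hELG hERG
  constructor
  · rintro v₀ v₁ v₂ ⟨-, -, h1, k1⟩ ⟨-, -, h2, k2⟩
    by_contra! h
    obtain ⟨⟨-, w, h3, k3⟩, ⟨-, u, h4, k4⟩⟩ := h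
    exact key_aux G _ EL ER f hU Set.subset_union_left Set.subset_union_right hdisj hf
      c₁ c₂ v₀ v₁ v₂ w u h1 k1 h2 k2 h3 k3 h4 k4
  · rintro v₀ v₁ v₂ ⟨-, -, h1, k1⟩ ⟨-, -, h2, k2⟩
    by_contra! h
    obtain ⟨⟨-, w, h3, k3⟩, ⟨-, u, h4, k4⟩⟩ := h
    exact key_aux G _ ER EL f hU Set.subset_union_right Set.subset_union_left hdisj.symm hf
      c₁ c₂ v₀ v₁ v₂ w u h1 k1 h2 k2 h3 k3 h4 k4
end

section
/- In the split setup, suppose f : E_i' → C is a valid partial coloring (a star edge coloring of (V, E_i')). Then for every pair (c₁,c₂) ∈ C×C: if (v₁,v₂) ∈ A_L^(3), then v₁ ∉ A_R^(7) or v₂ ∉ A_R^(6); and if (v₁,v₂) ∈ A_R^(3), then v₁ ∉ A_L^(7) or v₂ ∉ A_L^(6). -/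
variable {V C : Type*}

theorem split_aux (G : SimpleGraph V) (A B : Set (Sym2 V)) (hA : A ⊆ G.edgeSet)
    (hB : B ⊆ G.edgeSet) (hd : ∀ e, e ∈ A → e ∈ B → False)
    (f : Sym2 V → C) (hp : ∀ e₁ ∈ A, ∀ e₂ ∈ B, ∀ v, v ∈ e₁ → v ∈ e₂ → f e₁ ≠ f e₂)
    (hf : ∀ v₀ v₁ v₂ v₃ v₄ : V,
      s(v₀, v₁) ∈ B → s(v₁, v₂) ∈ A → s(v₂, v₃) ∈ A → s(v₃, v₄) ∈ B →
      ([v₀, v₁, v₂, v₃] : List V).Nodup → ([v₁, v₂, v₃, v₄] : List V).Nodup →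
      ¬ ∃ c₁ c₂ : C,
      (f s(v₀, v₁) = c₁ ∨ f s(v₀, v₁) = c₂) ∧ (f s(v₁, v₂) = c₁ ∨ f s(v₁, v₂) = c₂) ∧
      (f s(v₂, v₃) = c₁ ∨ f s(v₂, v₃) = c₂) ∧ (f s(v₃, v₄) = c₁ ∨ f s(v₃, v₄) = c₂))
    (c₁ c₂ : C) (X Y : Set V) (u w : V) (h : (u, w) ∈ N3 X A f c₁ c₂) :
    u ∉ N7 Y B f c₁ c₂ ∨ w ∉ N6 Y B f c₁ c₂ := by
  by_contra hcon
  push Not at hcon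
  obtain ⟨⟨-, a, ha, hac⟩, ⟨-, b, hb, hbc⟩⟩ := hcon
  obtain ⟨-, -, m, hm1, hm2, hc1, hc2⟩ := h
  simp only at hm1 hm2 hc1 hc2
  have n1 : u ≠ m := (hA hm1 : G.Adj u m).ne
  have n2 : m ≠ w := (hA hm2 : G.Adj m w).ne
  have n3 : u ≠ a := (hB ha : G.Adj u a).ne
  have n4 : w ≠ b := (hB hb : G.Adj w b).ne
  have hne : c₁ ≠ c₂ := by
    have := hp _ hm1 _ ha u (by simp) (by simp)
    rwa [hc1, hac] at this
  have n5 : u ≠ w := by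
    rintro rfl
    rw [Sym2.eq_swap, hc1] at hc2
    exact hne hc2
  have n6 : a ≠ m := by
    rintro rfl
    exact hd _ hm1 ha
  have n7 : b ≠ m := by
    rintro rfl
    exact hd _ hm2 (Sym2.eq_swap ▸ hb)
  have n8 : a ≠ w := by
    rintro rfl
    exact hp _ hm2 _ ha a (by simp) (by simp) (hc2.trans hac.symm)
  have n9 : b ≠ u := by
    rintro rfl
    exact hp _ hm1 _ hb b (by simp) (by simp) (hc1.trans hbc.symm)
  rw [Sym2.eq_swap] at ha hac
  refine hf a u m w b ha hm1 hm2 hb ?_ ?_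
    ⟨c₁, c₂, Or.inr hac, Or.inl hc1, Or.inr hc2, Or.inl hbc⟩
  · simp only [List.nodup_cons, List.mem_cons, List.not_mem_nil]
    grind
  · simp only [List.nodup_cons, List.mem_cons, List.not_mem_nil]
    grind

theorem valid_condition_iii
    [Fintype V] [Fintype C] (G : SimpleGraph V)
    (Xi XL XR : Set V) (v' v'' : V)
    (hXL : XL = Xi)
    (hv' : Xi \ XR = {v'}) (hv'' : XR \ Xi = {v''})
    (EL ER : Set (Sym2 V)) (hELG : EL ⊆ G.edgeSet) (hERG : ER ⊆ G.edgeSet)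
    (hdisj : Disjoint EL ER)
    (hERv : ∀ e ∈ ER, v' ∉ e)
    (hELv : ∀ e ∈ EL, v'' ∉ e)
    (hshare : ∀ v : V, (∃ e ∈ EL, v ∈ e) → (∃ e ∈ ER, v ∈ e) → v ∈ Xi \ {v'})
    (f : Sym2 V → C) (hf : IsValid (EL ∪ ER) f) (c₁ c₂ : C) :
    (∀ v₁ v₂ : V, (v₁, v₂) ∈ N3 XL EL f c₁ c₂ →
      v₁ ∉ N7 XR ER f c₁ c₂ ∨ v₂ ∉ N6 XR ER f c₁ c₂) ∧
    (∀ v₁ v₂ : V, (v₁, v₂) ∈ N3 XR ER f c₁ c₂ →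
      v₁ ∉ N7 XL EL f c₁ c₂ ∨ v₂ ∉ N6 XL EL f c₁ c₂) := by
  have hd : ∀ e, e ∈ EL → e ∈ ER → False := fun e h1 h2 => Set.disjoint_left.1 hdisj h1 h2
  obtain ⟨hp, hf⟩ := hf
  constructor
  · intro u w h
    refine split_aux G EL ER hELG hERG hd f ?_ ?_ c₁ c₂ XL XR u w h
    · intro e₁ h1 e₂ h2 v hv1 hv2
      exact hp _ (Or.inl h1) _ (Or.inr h2) (fun he => hd _ h1 (he ▸ h2)) ⟨v, hv1, hv2⟩
    · intro v₀ v₁ v₂ v₃ v₄ a b c d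
      exact hf _ _ _ _ _ (Or.inr a) (Or.inl b) (Or.inl c) (Or.inr d)
  · intro u w h
    refine split_aux G ER EL hERG hELG (fun e a b => hd e b a) f ?_ ?_ c₁ c₂ XR XL u w h
    · intro e₁ h1 e₂ h2 v hv1 hv2
      exact hp _ (Or.inr h1) _ (Or.inl h2) (fun he => hd _ h2 (he ▸ h1)) ⟨v, hv1, hv2⟩
    · intro v₀ v₁ v₂ v₃ v₄ a b c d
      exact hf _ _ _ _ _ (Or.inl a) (Or.inr b) (Or.inr c) (Or.inl d)
end

section
/- In the split setup, suppose f : E_i' → C is a valid partial coloring (a star edge coloring of (V, E_i')). Then for every pair (c₁,c₂) ∈ C×C: A_L^(4) ∩ A_R^(7) = ∅ and A_R^(4) ∩ A_L^(7) = ∅. -/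
variable {V C : Type*}

theorem aux_iv (G : SimpleGraph V) (Es : Set (Sym2 V)) (hG : Es ⊆ G.edgeSet)
    (f : Sym2 V → C) (hf : IsValid Es f) (c₁ c₂ : C) (u a b c d : V)
    (h0 : s(a, u) ∈ Es) (h1 : s(a, b) ∈ Es) (h2 : s(b, c) ∈ Es) (h3 : s(c, d) ∈ Es)
    (hne : s(a, u) ≠ s(a, b))
    (e0 : f s(a, u) = c₂) (e1 : f s(a, b) = c₁) (e2 : f s(b, c) = c₂) (e3 : f s(c, d) = c₁) :
    False := by
  obtain ⟨hp, hs⟩ := hf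
  have hc : c₁ ≠ c₂ := by
    intro h
    exact hp _ h0 _ h1 hne ⟨a, by simp, by simp⟩ (by rw [e0, e1, h])
  have n0 : a ≠ u := by simpa using (hG h0 : s(a, u) ∈ G.edgeSet) |> G.ne_of_adj
  have n1 : a ≠ b := by simpa using (hG h1 : s(a, b) ∈ G.edgeSet) |> G.ne_of_adj
  have n2 : b ≠ c := by simpa using (hG h2 : s(b, c) ∈ G.edgeSet) |> G.ne_of_adj
  have n3 : c ≠ d := by simpa using (hG h3 : s(c, d) ∈ G.edgeSet) |> G.ne_of_adj
  have ub : u ≠ b := by rintro rfl; exact hne rfl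
  have ac : a ≠ c := by
    rintro rfl
    rw [Sym2.eq_swap] at e2
    exact hc (e1.symm.trans e2)
  have bd : b ≠ d := by
    rintro rfl
    rw [Sym2.eq_swap] at e3
    exact hc (e3.symm.trans e2)
  have uc : u ≠ c := by
    rintro rfl
    refine hp _ h0 _ h2 ?_ ⟨u, by simp, by simp⟩ (e0.trans e2.symm)
    intro h
    simp [Sym2.eq_iff, n1, ac] at h
  have ad : a ≠ d := by
    rintro rfl
    refine hp _ h1 _ h3 ?_ ⟨a, by simp, by simp⟩ (e1.trans e3.symm)
    intro h
    simp [Sym2.eq_iff, n2, ac] at h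
  have h0' : s(u, a) ∈ Es := by rw [Sym2.eq_swap]; exact h0
  have e0' : f s(u, a) = c₂ := by rw [Sym2.eq_swap]; exact e0
  refine hs u a b c d h0' h1 h2 h3 ?_ ?_ ⟨c₁, c₂, Or.inr e0', Or.inl e1, Or.inr e2, Or.inl e3⟩
  · simp [n0.symm, ub, uc, n1, ac, n2]
  · simp [n1, ac, ad, n2, bd, n3]

theorem valid_condition_iv
    [Fintype V] [Fintype C] (G : SimpleGraph V)
    (Xi XL XR : Set V) (v' v'' : V)
    (hXL : XL = Xi)
    (hv' : Xi \ XR = {v'}) (hv'' : XR \ Xi = {v''})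
    (EL ER : Set (Sym2 V)) (hELG : EL ⊆ G.edgeSet) (hERG : ER ⊆ G.edgeSet)
    (hdisj : Disjoint EL ER)
    (hERv : ∀ e ∈ ER, v' ∉ e)
    (hELv : ∀ e ∈ EL, v'' ∉ e)
    (hshare : ∀ v : V, (∃ e ∈ EL, v ∈ e) → (∃ e ∈ ER, v ∈ e) → v ∈ Xi \ {v'})
    (f : Sym2 V → C) (hf : IsValid (EL ∪ ER) f) (c₁ c₂ : C) :
    N4 XL EL f c₁ c₂ ∩ N7 XR ER f c₁ c₂ = ∅ ∧
    N4 XR ER f c₁ c₂ ∩ N7 XL EL f c₁ c₂ = ∅ := by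
  have hG : EL ∪ ER ⊆ G.edgeSet := Set.union_subset hELG hERG
  constructor
  · rw [Set.eq_empty_iff_forall_notMem]
    rintro a ⟨⟨-, b, c, d, h1, h2, h3, e1, e2, e3⟩, -, u, h0, e0⟩
    exact aux_iv G _ hG f hf c₁ c₂ u a b c d (Or.inr h0) (Or.inl h1) (Or.inl h2) (Or.inl h3)
      (fun h => Set.disjoint_left.mp hdisj h1 (h ▸ h0)) e0 e1 e2 e3
  · rw [Set.eq_empty_iff_forall_notMem]
    rintro a ⟨⟨-, b, c, d, h1, h2, h3, e1, e2, e3⟩, -, u, h0, e0⟩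
    exact aux_iv G _ hG f hf c₁ c₂ u a b c d (Or.inl h0) (Or.inr h1) (Or.inr h2) (Or.inr h3)
      (fun h => Set.disjoint_left.mp hdisj (h ▸ h0) h1) e0 e1 e2 e3
end

section
/- In the split setup, suppose f : E_i' → C is a valid partial coloring (a star edge coloring of (V, E_i')). Then for every pair (c₁,c₂) ∈ C×C: if (v₁,v₂) ∈ A_L^(8), then v₁ ∉ A_R^(2) or v₂ ∉ A_R^(7); and if (v₁,v₂) ∈ A_R^(8), then v₁ ∉ A_L^(2) or v₂ ∉ A_L^(7). -/
variable {V C : Type*}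

theorem aux_v (G : SimpleGraph V) (EL ER : Set (Sym2 V)) (Es : Set (Sym2 V))
    (hL : EL ⊆ Es) (hR : ER ⊆ Es) (hG : Es ⊆ G.edgeSet)
    (hdisj : Disjoint EL ER) (f : Sym2 V → C) (hf : IsValid Es f) (c₁ c₂ : C)
    (v₁ v₂ a b w : V) (h12 : s(v₁, v₂) ∈ EL) (f12 : f s(v₁, v₂) = c₁)
    (h1a : s(v₁, a) ∈ ER) (hab : s(a, b) ∈ ER) (f1a : f s(v₁, a) = c₂) (fab : f s(a, b) = c₁)
    (h2w : s(v₂, w) ∈ ER) (f2w : f s(v₂, w) = c₂) : False := by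
  have hd : ∀ e ∈ EL, ∀ e' ∈ ER, e ≠ e' := fun e he e' he' h =>
    Set.disjoint_left.1 hdisj he (h ▸ he')
  obtain ⟨hp, hs⟩ := hf
  have n12 : v₁ ≠ v₂ := G.ne_of_adj (hG (hL h12))
  have n1a : v₁ ≠ a := G.ne_of_adj (hG (hR h1a))
  have nab : a ≠ b := G.ne_of_adj (hG (hR hab))
  have n2w : v₂ ≠ w := G.ne_of_adj (hG (hR h2w))
  have hc : c₁ ≠ c₂ := by
    rw [← f12, ← f1a]
    exact hp _ (hL h12) _ (hR h1a) (hd _ h12 _ h1a) ⟨v₁, by simp, by simp⟩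
  have nb1 : b ≠ v₁ := by
    rintro rfl
    rw [Sym2.eq_swap] at fab
    exact hc (fab.symm.trans f1a)
  have na2 : a ≠ v₂ := by
    rintro rfl
    exact hc (f12.symm.trans f1a)
  have nb2 : b ≠ v₂ := by
    rintro rfl
    exact hp _ (hL h12) _ (hR hab) (hd _ h12 _ hab) ⟨b, by simp, by simp⟩ (f12.trans fab.symm)
  have nw1 : w ≠ v₁ := by
    rintro rfl
    rw [Sym2.eq_swap] at f2w
    exact hc (f12.symm.trans f2w)
  have nwa : w ≠ a := by
    rintro rfl
    refine hp _ (hR h1a) _ (hR h2w) ?_ ⟨w, by simp, by simp⟩ (f1a.trans f2w.symm)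
    intro h
    exact n12 (Sym2.congr_left.1 h)
  refine hs b a v₁ v₂ w (Sym2.eq_swap ▸ hR hab) (Sym2.eq_swap ▸ hR h1a) (hL h12) (hR h2w)
    ?_ ?_ ⟨c₁, c₂, Or.inl ?_, Or.inr ?_, Or.inl f12, Or.inr f2w⟩
  · simp [nab.symm, nb1, nb2, n1a.symm, na2, n12]
  · simp [n1a.symm, na2, nwa.symm, n12, nw1.symm, n2w]
  · rw [Sym2.eq_swap]; exact fab
  · rw [Sym2.eq_swap]; exact f1a

theorem valid_condition_v
    [Fintype V] [Fintype C] (G : SimpleGraph V)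
    (Xi XL XR : Set V) (v' v'' : V)
    (hXL : XL = Xi)
    (hv' : Xi \ XR = {v'}) (hv'' : XR \ Xi = {v''})
    (EL ER : Set (Sym2 V)) (hELG : EL ⊆ G.edgeSet) (hERG : ER ⊆ G.edgeSet)
    (hdisj : Disjoint EL ER)
    (hERv : ∀ e ∈ ER, v' ∉ e)
    (hELv : ∀ e ∈ EL, v'' ∉ e)
    (hshare : ∀ v : V, (∃ e ∈ EL, v ∈ e) → (∃ e ∈ ER, v ∈ e) → v ∈ Xi \ {v'})
    (f : Sym2 V → C) (hf : IsValid (EL ∪ ER) f) (c₁ c₂ : C) :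
    (∀ v₁ v₂ : V, (v₁, v₂) ∈ N8 XL EL f c₁ c₂ →
      v₁ ∉ N2 XR ER f c₁ c₂ ∨ v₂ ∉ N7 XR ER f c₁ c₂) ∧
    (∀ v₁ v₂ : V, (v₁, v₂) ∈ N8 XR ER f c₁ c₂ →
      v₁ ∉ N2 XL EL f c₁ c₂ ∨ v₂ ∉ N7 XL EL f c₁ c₂) := by
  have hG : EL ∪ ER ⊆ G.edgeSet := Set.union_subset hELG hERG
  constructor
  · rintro v₁ v₂ ⟨-, -, h12, f12⟩
    by_contra hcon
    simp only [not_or, not_not] at hcon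
    obtain ⟨⟨-, a, b, h1a, hab, f1a, fab⟩, -, w, h2w, f2w⟩ := hcon
    exact aux_v G EL ER _ Set.subset_union_left Set.subset_union_right hG hdisj f hf c₁ c₂
      v₁ v₂ a b w h12 f12 h1a hab f1a fab h2w f2w
  · rintro v₁ v₂ ⟨-, -, h12, f12⟩
    by_contra hcon
    simp only [not_or, not_not] at hcon
    obtain ⟨⟨-, a, b, h1a, hab, f1a, fab⟩, -, w, h2w, f2w⟩ := hcon
    exact aux_v G ER EL _ Set.subset_union_right Set.subset_union_left hG hdisj.symm f hf c₁ c₂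
      v₁ v₂ a b w h12 f12 h1a hab f1a fab h2w f2w
end

section
/- In the split setup, suppose g_L : E_L' → C and g_R : E_R' → C are valid partial colorings (star edge colorings of (V,E_L') and (V,E_R') respectively), and define f' : E_i' → C by f'(e) = g_L(e) for e ∈ E_L' and f'(e) = g_R(e) for e ∈ E_R'. Suppose that for every pair (c₁,c₂) ∈ C×C, the neighbour sets A_L^(j) = N^(j)_{g_L}(c₁,c₂) (with respect to X_L) and A_R^(j) = N^(j)_{g_R}(c₁,c₂) (with respect to X_R) satisfy all of the following: (i) A_L^(1) ∩ A_R^(2) = ∅ and A_L^(2) ∩ A_R^(1) = ∅; (ii) if (v₀,v₁) ∈ A_L^(8) and (v₁,v₂) ∈ A_R^(9), then v₀ ∉ A_R^(7) or v₂ ∉ A_L^(6), and if (v₀,v₁) ∈ A_R^(8) and (v₁,v₂) ∈ A_L^(9), then v₀ ∉ A_L^(7) or v₂ ∉ A_R^(6); (iii) if (v₁,v₂) ∈ A_L^(3), then v₁ ∉ A_R^(7) or v₂ ∉ A_R^(6), and if (v₁,v₂) ∈ A_R^(3), then v₁ ∉ A_L^(7) or v₂ ∉ A_L^(6); (iv)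 A_L^(4) ∩ A_R^(7) = ∅ and A_R^(4) ∩ A_L^(7) = ∅; (v) if (v₁,v₂) ∈ A_L^(8), then v₁ ∉ A_R^(2) or v₂ ∉ A_R^(7), and if (v₁,v₂) ∈ A_R^(8), then v₁ ∉ A_L^(2) or v₂ ∉ A_L^(7); (vi) A_L^(6) ∩ A_R^(6) = ∅ and A_L^(7) ∩ A_R^(7) = ∅. Then f' is a valid partial coloring, i.e., a star edge coloring of (V, E_i'). -/
variable {V C : Type*}

theorem combined_coloring_valid
    [Fintype V] [Fintype C] (G : SimpleGraph V)
    (Xi XL XR : Set V) (v' v'' : V)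
    (hXL : XL = Xi)
    (hv' : Xi \ XR = {v'}) (hv'' : XR \ Xi = {v''})
    (EL ER : Set (Sym2 V)) (hELG : EL ⊆ G.edgeSet) (hERG : ER ⊆ G.edgeSet)
    (hdisj : Disjoint EL ER)
    (hERv : ∀ e ∈ ER, v' ∉ e)
    (hELv : ∀ e ∈ EL, v'' ∉ e)
    (hshare : ∀ v : V, (∃ e ∈ EL, v ∈ e) → (∃ e ∈ ER, v ∈ e) → v ∈ Xi \ {v'})
    (gL gR f' : Sym2 V → C)
    (hgL : IsValid EL gL) (hgR : IsValid ER gR)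
    (hf'L : ∀ e ∈ EL, f' e = gL e) (hf'R : ∀ e ∈ ER, f' e = gR e)
    (hi : ∀ c₁ c₂ : C, N1 XL EL gL c₁ c₂ ∩ N2 XR ER gR c₁ c₂ = ∅ ∧
      N2 XL EL gL c₁ c₂ ∩ N1 XR ER gR c₁ c₂ = ∅)
    (hii : ∀ c₁ c₂ : C,
      (∀ v₀ v₁ v₂ : V, (v₀, v₁) ∈ N8 XL EL gL c₁ c₂ → (v₁, v₂) ∈ N9 XR ER gR c₁ c₂ →
        v₀ ∉ N7 XR ER gR c₁ c₂ ∨ v₂ ∉ N6 XL EL gL c₁ c₂) ∧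
      (∀ v₀ v₁ v₂ : V, (v₀, v₁) ∈ N8 XR ER gR c₁ c₂ → (v₁, v₂) ∈ N9 XL EL gL c₁ c₂ →
        v₀ ∉ N7 XL EL gL c₁ c₂ ∨ v₂ ∉ N6 XR ER gR c₁ c₂))
    (hiii : ∀ c₁ c₂ : C,
      (∀ v₁ v₂ : V, (v₁, v₂) ∈ N3 XL EL gL c₁ c₂ →
        v₁ ∉ N7 XR ER gR c₁ c₂ ∨ v₂ ∉ N6 XR ER gR c₁ c₂) ∧
      (∀ v₁ v₂ : V, (v₁, v₂) ∈ N3 XR ER gR c₁ c₂ →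
        v₁ ∉ N7 XL EL gL c₁ c₂ ∨ v₂ ∉ N6 XL EL gL c₁ c₂))
    (hiv : ∀ c₁ c₂ : C, N4 XL EL gL c₁ c₂ ∩ N7 XR ER gR c₁ c₂ = ∅ ∧
      N4 XR ER gR c₁ c₂ ∩ N7 XL EL gL c₁ c₂ = ∅)
    (hv : ∀ c₁ c₂ : C,
      (∀ v₁ v₂ : V, (v₁, v₂) ∈ N8 XL EL gL c₁ c₂ →
        v₁ ∉ N2 XR ER gR c₁ c₂ ∨ v₂ ∉ N7 XR ER gR c₁ c₂) ∧
      (∀ v₁ v₂ : V, (v₁, v₂) ∈ N8 XR ER gR c₁ c₂ →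
        v₁ ∉ N2 XL EL gL c₁ c₂ ∨ v₂ ∉ N7 XL EL gL c₁ c₂))
    (hvi : ∀ c₁ c₂ : C, N6 XL EL gL c₁ c₂ ∩ N6 XR ER gR c₁ c₂ = ∅ ∧
      N7 XL EL gL c₁ c₂ ∩ N7 XR ER gR c₁ c₂ = ∅) :
    IsValid (EL ∪ ER) f' := by
  subst hXL
  have sh : ∀ v : V, (∃ e ∈ EL, v ∈ e) → (∃ e ∈ ER, v ∈ e) → v ∈ XL ∧ v ∈ XR := by
    intro v h1 h2
    obtain ⟨hx, hn⟩ := hshare v h1 h2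
    refine ⟨hx, ?_⟩
    by_contra hc
    have : v ∈ XL \ XR := ⟨hx, hc⟩
    rw [hv'] at this
    exact hn this
  obtain ⟨L, hL⟩ : ∃ L : V → V → C → Prop, ∀ u v c, L u v c ↔ s(u, v) ∈ EL ∧ gL s(u, v) = c :=
    ⟨_, fun _ _ _ => Iff.rfl⟩
  obtain ⟨R, hR⟩ : ∃ R : V → V → C → Prop, ∀ u v c, R u v c ↔ s(u, v) ∈ ER ∧ gR s(u, v) = c :=
    ⟨_, fun _ _ _ => Iff.rfl⟩
  have Ls : ∀ {u v c}, L u v c → L v u c := by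
    intro u v c h; rw [hL] at h ⊢; rwa [Sym2.eq_swap]
  have Rs : ∀ {u v c}, R u v c → R v u c := by
    intro u v c h; rw [hR] at h ⊢; rwa [Sym2.eq_swap]
  have shX : ∀ {x u w a b}, L x u a → R x w b → x ∈ XL ∧ x ∈ XR := by
    intro x u w a b h1 h2
    exact sh x ⟨_, ((hL _ _ _).1 h1).1, by simp⟩ ⟨_, ((hR _ _ _).1 h2).1, by simp⟩
  have h0 : ∀ {x u w a}, L x u a → R x w a → False := by
    intro x u w a h1 h2
    obtain ⟨p, q⟩ := shX h1 h2
    rw [hL] at h1; rw [hR] at h2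
    exact Set.eq_empty_iff_forall_notMem.1 (hvi a a).1 x ⟨⟨p, u, h1⟩, ⟨q, w, h2⟩⟩
  have h1 : ∀ {x y z u w a b}, L x y a → L y z b → R x u b → R u w a → False := by
    intro x y z u w a b e1 e2 e3 e4
    obtain ⟨p, q⟩ := shX e1 e3
    rw [hL] at e1 e2; rw [hR] at e3 e4
    exact Set.eq_empty_iff_forall_notMem.1 (hi a b).1 x
      ⟨⟨p, y, z, e1.1, e2.1, e1.2, e2.2⟩, ⟨q, u, w, e3.1, e4.1, e3.2, e4.2⟩⟩
  have h2 : ∀ {x y z u w a b}, R x y b → L y z a → R z u b → L u w a → False := by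
    intro x y z u w a b e1 e2 e3 e4
    have p1 := shX e2 (Rs e1)
    have p2 := shX (Ls e2) e3
    have p3 := shX e4 (Rs e3)
    replace e1 := Rs e1
    rw [hL] at e2 e4; rw [hR] at e1 e3
    rcases (hii a b).1 y z u ⟨p1.1, p2.1, e2⟩ ⟨p2.2, p3.2, e3⟩ with h | h
    · exact h ⟨p1.2, x, e1⟩
    · exact h ⟨p3.1, w, e4⟩
  have h3L : ∀ {x m y u w a b}, L x m a → L m y b → R x u b → R y w a → False := by
    intro x m y u w a b e1 e2 e3 e4
    have p1 := shX e1 e3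
    have p2 := shX (Ls e2) e4
    rw [hL] at e1 e2; rw [hR] at e3 e4
    rcases (hiii a b).1 x y ⟨p1.1, p2.1, m, e1.1, e2.1, e1.2, e2.2⟩ with h | h
    · exact h ⟨p1.2, u, e3⟩
    · exact h ⟨p2.2, w, e4⟩
  have h3R : ∀ {x m y u w a b}, R x m a → R m y b → L x u b → L y w a → False := by
    intro x m y u w a b e1 e2 e3 e4
    have p1 := shX e3 e1
    have p2 := shX e4 (Rs e2)
    rw [hR] at e1 e2; rw [hL] at e3 e4
    rcases (hiii a b).2 x y ⟨p1.2, p2.2, m, e1.1, e2.1, e1.2, e2.2⟩ with h | h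
    · exact h ⟨p1.1, u, e3⟩
    · exact h ⟨p2.1, w, e4⟩
  have h4L : ∀ {x y z w u a b}, L x y a → L y z b → L z w a → R x u b → False := by
    intro x y z w u a b e1 e2 e3 e4
    have p := shX e1 e4
    rw [hL] at e1 e2 e3; rw [hR] at e4
    exact Set.eq_empty_iff_forall_notMem.1 (hiv a b).1 x
      ⟨⟨p.1, y, z, w, e1.1, e2.1, e3.1, e1.2, e2.2, e3.2⟩, ⟨p.2, u, e4⟩⟩
  have h4R : ∀ {x y z w u a b}, R x y a → R y z b → R z w a → L x u b → False := by
    intro x y z w u a b e1 e2 e3 e4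
    have p := shX e4 e1
    rw [hR] at e1 e2 e3; rw [hL] at e4
    exact Set.eq_empty_iff_forall_notMem.1 (hiv a b).2 x
      ⟨⟨p.2, y, z, w, e1.1, e2.1, e3.1, e1.2, e2.2, e3.2⟩, ⟨p.1, u, e4⟩⟩
  have h5L : ∀ {x y u w z a b}, L x y a → R x u b → R u w a → R y z b → False := by
    intro x y u w z a b e1 e2 e3 e4
    have p1 := shX e1 e2
    have p2 := shX (Ls e1) e4
    rw [hL] at e1; rw [hR] at e2 e3 e4
    rcases (hv a b).1 x y ⟨p1.1, p2.1, e1⟩ with h | h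
    · exact h ⟨p1.2, u, w, e2.1, e3.1, e2.2, e3.2⟩
    · exact h ⟨p2.2, z, e4⟩
  have h5R : ∀ {x y u w z a b}, R x y a → L x u b → L u w a → L y z b → False := by
    intro x y u w z a b e1 e2 e3 e4
    have p1 := shX e2 e1
    have p2 := shX e4 (Rs e1)
    rw [hR] at e1; rw [hL] at e2 e3 e4
    rcases (hv a b).2 x y ⟨p1.2, p2.2, e1⟩ with h | h
    · exact h ⟨p1.1, u, w, e2.1, e3.1, e2.2, e3.2⟩
    · exact h ⟨p2.1, z, e4⟩
  have cov : ∀ {u v c}, s(u, v) ∈ EL ∪ ER → f' s(u, v) = c → L u v c ∨ R u v c := by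
    rintro u v c (h | h) hc
    · exact Or.inl ((hL _ _ _).2 ⟨h, by rw [← hf'L _ h, hc]⟩)
    · exact Or.inr ((hR _ _ _).2 ⟨h, by rw [← hf'R _ h, hc]⟩)
  have proper : IsProper (EL ∪ ER) f' := by
    rintro e₁ m₁ e₂ m₂ hne ⟨v, k₁, k₂⟩ heq
    obtain ⟨u, rfl⟩ := Sym2.mem_iff_exists.1 k₁
    obtain ⟨w, rfl⟩ := Sym2.mem_iff_exists.1 k₂
    rcases cov m₁ heq with a | a <;> rcases cov m₂ rfl with b | b
    · rw [hL] at a b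
      exact hgL.1 _ a.1 _ b.1 hne ⟨v, k₁, k₂⟩ (a.2.trans b.2.symm)
    · exact h0 a b
    · exact h0 b a
    · rw [hR] at a b
      exact hgR.1 _ a.1 _ b.1 hne ⟨v, k₁, k₂⟩ (a.2.trans b.2.symm)
  refine ⟨proper, ?_⟩
  rintro v₀ v₁ v₂ v₃ v₄ m₁ m₂ m₃ m₄ n₁ n₂ ⟨c₁, c₂, k₁, k₂, k₃, k₄⟩
  have d₁ : f' s(v₀, v₁) ≠ f' s(v₁, v₂) :=
    proper _ m₁ _ m₂ (by simp at n₁ ⊢; grind) ⟨v₁, by simp, by simp⟩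
  have d₂ : f' s(v₁, v₂) ≠ f' s(v₂, v₃) :=
    proper _ m₂ _ m₃ (by simp at n₁ ⊢; grind) ⟨v₂, by simp, by simp⟩
  have d₃ : f' s(v₂, v₃) ≠ f' s(v₃, v₄) :=
    proper _ m₃ _ m₄ (by simp at n₂ ⊢; grind) ⟨v₃, by simp, by simp⟩
  have q₃ : f' s(v₂, v₃) = f' s(v₀, v₁) := by grind
  have q₄ : f' s(v₃, v₄) = f' s(v₁, v₂) := by grind
  generalize ha : f' s(v₀, v₁) = a at *
  generalize hb : f' s(v₁, v₂) = b at *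
  rcases cov m₁ ha with e₁ | e₁ <;> rcases cov m₂ hb with e₂ | e₂ <;>
    rcases cov m₃ q₃ with e₃ | e₃ <;> rcases cov m₄ q₄ with e₄ | e₄
  · rw [hL] at e₁ e₂ e₃ e₄
    exact hgL.2 v₀ v₁ v₂ v₃ v₄ e₁.1 e₂.1 e₃.1 e₄.1 n₁ n₂
      ⟨a, b, Or.inl e₁.2, Or.inr e₂.2, Or.inl e₃.2, Or.inr e₄.2⟩
  · exact h4L (Ls e₃) (Ls e₂) (Ls e₁) e₄
  · exact h5R e₃ (Ls e₂) (Ls e₁) e₄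
  · exact h1 (Ls e₂) (Ls e₁) e₃ e₄
  · exact h5R (Rs e₂) e₃ e₄ (Ls e₁)
  · exact h2 (Rs e₄) (Ls e₃) (Rs e₂) (Ls e₁)
  · exact h3R e₂ e₃ (Ls e₁) e₄
  · exact h4R e₂ e₃ e₄ (Ls e₁)
  · exact h4L e₂ e₃ e₄ (Rs e₁)
  · exact h3L e₂ e₃ (Rs e₁) e₄
  · exact h2 e₁ e₂ e₃ e₄
  · exact h5L (Ls e₂) e₃ e₄ (Rs e₁)
  · exact h1 e₃ e₄ (Rs e₂) (Rs e₁)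
  · exact h5L e₃ (Rs e₂) (Rs e₁) e₄
  · exact h4R (Rs e₃) (Rs e₂) (Rs e₁) e₄
  · rw [hR] at e₁ e₂ e₃ e₄
    exact hgR.2 v₀ v₁ v₂ v₃ v₄ e₁.1 e₂.1 e₃.1 e₄.1 n₁ n₂
      ⟨a, b, Or.inl e₁.2, Or.inr e₂.2, Or.inl e₃.2, Or.inr e₄.2⟩
end
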